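/- For every g ≥ 1, the integral symplectic group Sp(2g,ℤ) is finitely generated and has uniformly exponential growth, i.e., ω(Sp(2g,ℤ)) > 1. -/

import Mathlib

open Matrix
/-- The matrix of the standard symplectic form
`q(x,y) = x₁y₂ - x₂y₁ + ⋯ + x_{2g-1}y_{2g} - x_{2g}y_{2g-1}` on `ℤ^{2g}`. -/
def stdSymplecticJ (g : ℕ) : Matrix (Fin (2 * g)) (Fin (2 * g)) ℤ :=
  Matrix.of fun i j =>
    if (i : ℕ) % 2 = 0 ∧ (j : ℕ) = (i : ℕ) + 1 then 1
    else if (j : ℕ) % 2 = 0 ∧ (i : ℕ) = (j : ℕ) + 1 then -1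
    else 0

/-- `Sp(2g,ℤ)`: the group of `2g × 2g` integer matrices preserving the standard
non-degenerate skew-symmetric bilinear form on `ℤ^{2g}`. -/
def Sp (g : ℕ) : Subgroup (GL (Fin (2 * g)) ℤ) where
  carrier := {M | (M : Matrix (Fin (2 * g)) (Fin (2 * g)) ℤ) * stdSymplecticJ g *
      (M : Matrix (Fin (2 * g)) (Fin (2 * g)) ℤ)ᵀ = stdSymplecticJ g}
  one_mem' := by
    simp [Units.val_one]
  mul_mem' := by
    intro a b ha hb
    simp only [Set.mem_setOf_eq] at *
    have : (a : Matrix (Fin (2 * g)) (Fin (2 * g)) ℤ) *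
        ((b : Matrix (Fin (2 * g)) (Fin (2 * g)) ℤ) * stdSymplecticJ g *
          (b : Matrix (Fin (2 * g)) (Fin (2 * g)) ℤ)ᵀ) *
        (a : Matrix (Fin (2 * g)) (Fin (2 * g)) ℤ)ᵀ = stdSymplecticJ g := by
      rw [hb, ha]
    rw [Units.val_mul, Matrix.transpose_mul]
    calc (a : Matrix (Fin (2 * g)) (Fin (2 * g)) ℤ) * b * stdSymplecticJ g *
          ((b : Matrix (Fin (2 * g)) (Fin (2 * g)) ℤ)ᵀ *
            (a : Matrix (Fin (2 * g)) (Fin (2 * g)) ℤ)ᵀ)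
        = (a : Matrix (Fin (2 * g)) (Fin (2 * g)) ℤ) *
            ((b : Matrix (Fin (2 * g)) (Fin (2 * g)) ℤ) * stdSymplecticJ g *
              (b : Matrix (Fin (2 * g)) (Fin (2 * g)) ℤ)ᵀ) *
            (a : Matrix (Fin (2 * g)) (Fin (2 * g)) ℤ)ᵀ := by noncomm_ring
      _ = stdSymplecticJ g := this
  inv_mem' := by
    intro M h
    simp only [Set.mem_setOf_eq] at *
    have hd : IsUnit (M : Matrix (Fin (2 * g)) (Fin (2 * g)) ℤ).det :=
      (Matrix.isUnit_iff_isUnit_det _).mp M.isUnit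
    have hdt : IsUnit ((M : Matrix (Fin (2 * g)) (Fin (2 * g)) ℤ)ᵀ).det := by
      rwa [Matrix.det_transpose]
    rw [Matrix.coe_units_inv, Matrix.transpose_nonsing_inv]
    calc (M : Matrix (Fin (2 * g)) (Fin (2 * g)) ℤ)⁻¹ * stdSymplecticJ g *
          ((M : Matrix (Fin (2 * g)) (Fin (2 * g)) ℤ)ᵀ)⁻¹
        = (M : Matrix (Fin (2 * g)) (Fin (2 * g)) ℤ)⁻¹ *
            ((M : Matrix (Fin (2 * g)) (Fin (2 * g)) ℤ) * stdSymplecticJ g *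
              (M : Matrix (Fin (2 * g)) (Fin (2 * g)) ℤ)ᵀ) *
            ((M : Matrix (Fin (2 * g)) (Fin (2 * g)) ℤ)ᵀ)⁻¹ := by rw [h]
      _ = ((M : Matrix (Fin (2 * g)) (Fin (2 * g)) ℤ)⁻¹ *
            (M : Matrix (Fin (2 * g)) (Fin (2 * g)) ℤ)) * stdSymplecticJ g *
            ((M : Matrix (Fin (2 * g)) (Fin (2 * g)) ℤ)ᵀ *
              ((M : Matrix (Fin (2 * g)) (Fin (2 * g)) ℤ)ᵀ)⁻¹) := by noncomm_ring
      _ = stdSymplecticJ g := by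
          rw [Matrix.nonsing_inv_mul _ hd, Matrix.mul_nonsing_inv _ hdt, one_mul, mul_one]

open Filter

variable {G : Type*} [Group G]

noncomputable def wordLength (S : Set G) (g : G) : ℕ :=
  sInf {k | ∃ w : List G, w.length = k ∧ (∀ x ∈ w, x ∈ S ∨ x⁻¹ ∈ S) ∧ w.prod = g}

noncomputable def ballCard (S : Set G) (n : ℕ) : ℕ :=
  Set.ncard {g : G | wordLength S g ≤ n}

noncomputable def growthRate (S : Set G) : ℝ :=
  limUnder atTop (fun n : ℕ => (ballCard S n : ℝ) ^ ((n : ℝ)⁻¹))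

noncomputable def minGrowth (G : Type*) [Group G] : ℝ :=
  sInf {x : ℝ | ∃ S : Finset G, Subgroup.closure (S : Set G) = ⊤ ∧ growthRate (S : Set G) = x}

open Matrix Filter

/-- `g` is a product of at most `n` letters from `S ∪ S⁻¹`. -/
def InBall {Γ : Type*} [Group Γ] (S : Set Γ) (n : ℕ) (g : Γ) : Prop :=
  ∃ w : List Γ, w.length ≤ n ∧ (∀ x ∈ w, x ∈ S ∨ x⁻¹ ∈ S) ∧ w.prod = g

section Growth
variable {Γ : Type*} [Group Γ] {S : Set Γ}

lemma InBall.one (n : ℕ) : InBall S n 1 := ⟨[], by simp, by simp, by simp⟩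

lemma InBall.mul {m n : ℕ} {a b : Γ} (ha : InBall S m a) (hb : InBall S n b) :
    InBall S (m + n) (a * b) := by
  obtain ⟨v, hv, hv', rfl⟩ := ha
  obtain ⟨w, hw, hw', rfl⟩ := hb
  refine ⟨v ++ w, by simp; omega, ?_, by simp⟩
  intro x hx
  rcases List.mem_append.1 hx with h | h
  · exact hv' x h
  · exact hw' x h

lemma InBall.mono {m n : ℕ} (hmn : m ≤ n) {a : Γ} (ha : InBall S m a) : InBall S n a := by
  obtain ⟨v, hv, h⟩ := ha
  exact ⟨v, hv.trans hmn, h⟩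

lemma InBall.pow {m : ℕ} {a : Γ} (ha : InBall S m a) (k : ℕ) : InBall S (k * m) (a ^ k) := by
  induction k with
  | zero => simpa using InBall.one 0
  | succ k ih => rw [pow_succ, Nat.succ_mul]; exact ih.mul ha

lemma InBall.of_closure (hS : Subgroup.closure S = ⊤) (a : Γ) : ∃ n, InBall S n a := by
  have : a ∈ Subgroup.closure S := by rw [hS]; trivial
  rw [← Subgroup.mem_toSubmonoid, Subgroup.closure_toSubmonoid] at this
  obtain ⟨l, hl, hl'⟩ := Submonoid.exists_list_of_mem_closure this
  exact ⟨l.length, l, le_rfl, fun x hx => by simpa using hl x hx, hl'⟩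

lemma wordLength_le_iff (hS : Subgroup.closure S = ⊤) (a : Γ) (n : ℕ) :
    wordLength S a ≤ n ↔ InBall S n a := by
  constructor
  · intro h
    obtain ⟨m, l, -, hl, hl'⟩ := InBall.of_closure hS a
    have hne : {k | ∃ w : List Γ, w.length = k ∧ (∀ x ∈ w, x ∈ S ∨ x⁻¹ ∈ S) ∧ w.prod = a}.Nonempty :=
      ⟨l.length, l, rfl, hl, hl'⟩
    obtain ⟨w, hw, hw', hw''⟩ := Nat.sInf_mem hne
    exact ⟨w, by rw [hw]; exact h, hw', hw''⟩
  · rintro ⟨w, hw, hw', hw''⟩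
    unfold wordLength
    refine le_trans (Nat.sInf_le ?_) hw
    exact ⟨w, rfl, hw', hw''⟩

lemma finite_inBall (hf : S.Finite) (n : ℕ) : {a : Γ | InBall S n a}.Finite := by
  induction n with
  | zero =>
    refine (Set.finite_singleton (1 : Γ)).subset ?_
    rintro a ⟨w, hw, -, rfl⟩
    have : w = [] := by simpa using hw
    simp [this]
  | succ n ih =>
    have h2 : (S ∪ S⁻¹ ∪ {1}).Finite := (hf.union hf.inv).union (Set.finite_singleton _)
    refine (Set.Finite.mul h2 ih).subset ?_
    rintro a ⟨w, hw, hw', rfl⟩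
    cases w with
    | nil => exact ⟨1, by simp, 1, InBall.one _, by simp⟩
    | cons x w =>
      refine ⟨x, ?_, w.prod, ⟨w, by simpa using hw, fun y hy => hw' y (by simp [hy]), rfl⟩, by simp⟩
      have := hw' x (by simp)
      rcases this with h | h
      · exact Or.inl (Or.inl h)
      · exact Or.inl (Or.inr (by simpa using h))

lemma ballCard_eq (hS : Subgroup.closure S = ⊤) (n : ℕ) :
    ballCard S n = Set.ncard {a : Γ | InBall S n a} := by
  unfold ballCard
  congr 1
  ext a
  exact wordLength_le_iff hS a n

lemma inBall_split {m n : ℕ} {a : Γ} (ha : InBall S (m + n) a) :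
    ∃ x y, InBall S m x ∧ InBall S n y ∧ x * y = a := by
  obtain ⟨w, hw, hw', rfl⟩ := ha
  refine ⟨(w.take m).prod, (w.drop m).prod, ⟨w.take m, by simp, ?_, rfl⟩,
    ⟨w.drop m, by simp; omega, ?_, rfl⟩, by rw [← List.prod_append, List.take_append_drop]⟩
  · intro x hx; exact hw' x (List.mem_of_mem_take hx)
  · intro x hx; exact hw' x (List.mem_of_mem_drop hx)

lemma ballCard_add (hf : S.Finite) (hS : Subgroup.closure S = ⊤) (m n : ℕ) :
    ballCard S (m + n) ≤ ballCard S m * ballCard S n := by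
  rw [ballCard_eq hS, ballCard_eq hS, ballCard_eq hS, ← Set.ncard_prod]
  have hfin := (finite_inBall hf m).prod (finite_inBall hf n)
  refine le_trans (Set.ncard_le_ncard ?_ (hfin.image fun z : Γ × Γ => z.1 * z.2))
    (Set.ncard_image_le hfin)
  intro a ha
  obtain ⟨x, y, hx, hy, rfl⟩ := inBall_split ha
  exact ⟨(x, y), ⟨hx, hy⟩, rfl⟩

lemma ballCard_pos (hf : S.Finite) (hS : Subgroup.closure S = ⊤) (n : ℕ) :
    1 ≤ ballCard S n := by
  rw [ballCard_eq hS]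
  exact (Set.ncard_pos (finite_inBall hf n)).2 ⟨1, InBall.one n⟩

lemma growthRate_tendsto (hf : S.Finite) (hS : Subgroup.closure S = ⊤) :
    Tendsto (fun n : ℕ => (ballCard S n : ℝ) ^ ((n : ℝ)⁻¹)) atTop (nhds (growthRate S)) := by
  have hpos : ∀ n, (1 : ℝ) ≤ ballCard S n := fun n => by exact_mod_cast ballCard_pos hf hS n
  have hsub : Subadditive (fun n => Real.log (ballCard S n)) := by
    intro m n
    rw [← Real.log_mul (by linarith [hpos m]) (by linarith [hpos n])]
    apply Real.log_le_log (by linarith [hpos (m + n)])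
    exact_mod_cast ballCard_add hf hS m n
  have hbdd : BddBelow (Set.range fun n : ℕ => Real.log (ballCard S n) / n) := by
    refine ⟨0, ?_⟩
    rintro _ ⟨n, rfl⟩
    exact div_nonneg (Real.log_nonneg (hpos n)) (Nat.cast_nonneg n)
  have h := hsub.tendsto_lim hbdd
  have h2 := (Real.continuous_exp.tendsto _).comp h
  have h3 : Tendsto (fun n : ℕ => (ballCard S n : ℝ) ^ ((n : ℝ)⁻¹)) atTop
      (nhds (Real.exp hsub.lim)) := by
    refine h2.congr ?_
    intro n
    simp only [Function.comp]
    rw [Real.rpow_def_of_pos (by linarith [hpos n]), div_eq_mul_inv]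
  exact tendsto_nhds_limUnder ⟨_, h3⟩

/-- The elements `a, b` generate a free semigroup (tested on words of equal length). -/
def FreePair (a b : Γ) : Prop :=
  ∀ w w' : List Bool, w.length = w'.length →
    (w.map fun c => if c then b else a).prod = (w'.map fun c => if c then b else a).prod → w = w'

lemma growthRate_ge (hf : S.Finite) (hS : Subgroup.closure S = ⊤) {l : ℕ} (hl : 1 ≤ l)
    {a b : Γ} (ha : InBall S l a) (hb : InBall S l b) (hab : FreePair a b) :
    (2 : ℝ) ^ ((l : ℝ)⁻¹) ≤ growthRate S := by
  have hball : ∀ w : List Bool, InBall S (w.length * l) (w.map fun c => if c then b else a).prod := by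
    intro w
    induction w with
    | nil => exact InBall.one _
    | cons c w ih =>
      have hc : InBall S l (if c then b else a) := by split_ifs <;> assumption
      simp only [List.map_cons, List.prod_cons, List.length_cons, Nat.succ_mul]
      rw [add_comm]
      exact hc.mul ih
  have hcard : ∀ j : ℕ, 2 ^ j ≤ ballCard S (j * l) := by
    intro j
    rw [ballCard_eq hS]
    have : Set.ncard (Set.univ : Set (List.Vector Bool j)) ≤ Set.ncard {a : Γ | InBall S (j * l) a} := by
      refine Set.ncard_le_ncard_of_injOn
        (fun v => (v.1.map fun c => if c then b else a).prod) ?_ ?_ (finite_inBall hf _)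
      · intro v _
        have := hball v.1
        rw [v.2] at this
        exact this
      · intro v _ v' _ h
        exact Subtype.ext (hab v.1 v'.1 (v.2.trans v'.2.symm) h)
    rw [Set.ncard_univ, Nat.card_eq_fintype_card, card_vector] at this
    simpa using this
  have ht := growthRate_tendsto hf hS
  have hsubseq : Tendsto (fun j : ℕ => j * l) atTop atTop :=
    tendsto_id.atTop_mul_const' (by omega)
  refine ge_of_tendsto (ht.comp hsubseq) ?_
  filter_upwards [eventually_ge_atTop 1] with j hj
  simp only [Function.comp]
  have hj0 : (j : ℝ) ≠ 0 := by positivity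
  have h1 : (2 : ℝ) ^ ((l : ℝ)⁻¹) = ((2 : ℝ) ^ j) ^ (((j * l : ℕ) : ℝ)⁻¹) := by
    rw [← Real.rpow_natCast, ← Real.rpow_mul (by norm_num)]
    congr 1
    push_cast
    rw [mul_inv, ← mul_assoc, mul_inv_cancel₀ hj0, one_mul]
  rw [h1]
  apply Real.rpow_le_rpow (by positivity)
  · exact_mod_cast hcard j
  · positivity

end Growth

lemma minGrowth_gt {Γ : Type*} [Group Γ] (hfg : Group.FG Γ) {l : ℕ} (hl : 1 ≤ l)
    (h : ∀ S : Finset Γ, Subgroup.closure (S : Set Γ) = ⊤ →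
      ∃ a b : Γ, InBall (S : Set Γ) l a ∧ InBall (S : Set Γ) l b ∧ FreePair a b) :
    1 < minGrowth Γ := by
  have h1 : (1 : ℝ) < (2 : ℝ) ^ ((l : ℝ)⁻¹) :=
    Real.one_lt_rpow (by norm_num) (by positivity)
  refine lt_of_lt_of_le h1 ?_
  unfold minGrowth
  refine le_csInf ?_ ?_
  · obtain ⟨S, hS⟩ := (Group.fg_def.1 hfg)
    exact ⟨_, S, hS, rfl⟩
  · rintro x ⟨S, hS, rfl⟩
    obtain ⟨a, b, ha, hb, hab⟩ := h S hS
    exact growthRate_ge S.finite_toSet hS hl ha hb hab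

open Matrix Filter

section PingPong
variable {A : Type*} [NormedRing A]

/-- `Y` is supported on the graph of `Θ : im p → ker p`. -/
def IsGraph (p Y Θ : A) : Prop :=
  p * Θ = 0 ∧ Θ * p = Θ ∧ ∃ Z Zi : A, Y = (p + Θ) * Z ∧ p * Z = Z ∧ Z * Zi = p

lemma IsGraph.unique {p Y Θ Θ' : A} (hp : p * p = p) (h : IsGraph p Y Θ) (h' : IsGraph p Y Θ') :
    Θ = Θ' := by
  obtain ⟨h1, h2, Z, Zi, h3, h4, h5⟩ := h
  obtain ⟨h1', h2', Z', Zi', h3', h4', h5'⟩ := h'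
  have e1 : p * Y = Z := by rw [h3, ← mul_assoc, mul_add, hp, h1, add_zero, h4]
  have e1' : p * Y = Z' := by rw [h3', ← mul_assoc, mul_add, hp, h1', add_zero, h4']
  have e2 : Z = Z' := e1.symm.trans e1'
  subst e2
  have e3 : Θ * Z = Θ' * Z := by
    have := h3.symm.trans h3'
    rw [add_mul, add_mul] at this
    exact add_left_cancel this
  calc Θ = Θ * (Z * Zi) := by rw [h5, h2]
    _ = Θ' * (Z * Zi) := by rw [← mul_assoc, e3, mul_assoc]
    _ = Θ' := by rw [h5, h2']

lemma IsGraph.stepH {p H K Y Θ : A} (hHp : H * p = p * H) (hpK : p * K = K)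
    (hKH : K * H = p) (hHK : H * K = p) (h : IsGraph p Y Θ) :
    IsGraph p (H * Y) (H * Θ * K) := by
  obtain ⟨h1, h2, Z, Zi, h3, h4, h5⟩ := h
  have hKp : K * p = K := by rw [← hHK, ← mul_assoc, hKH, hpK]
  refine ⟨?_, by rw [mul_assoc, hKp], H * Z, Zi * K, ?_, ?_, ?_⟩
  · rw [← mul_assoc, ← mul_assoc, ← hHp, mul_assoc H, h1]; simp
  · rw [h3, add_mul, add_mul, mul_add, mul_assoc (H * Θ), ← mul_assoc K, hKH, h4, ← mul_assoc p,
      ← hHp, mul_assoc H p, h4, mul_assoc]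
  · rw [← mul_assoc, ← hHp, mul_assoc, h4]
  · rw [mul_assoc, ← mul_assoc Z, h5, hpK, hHK]

lemma norm_stepH {p H K Θ : A} (h1 : p * Θ = 0) :
    ‖H * Θ * K‖ ≤ ‖H * (1 - p)‖ * ‖K‖ * ‖Θ‖ := by
  have : H * Θ * K = H * (1 - p) * Θ * K := by
    rw [mul_assoc H (1 - p), sub_mul, h1, sub_zero, one_mul]
  rw [this]
  calc ‖H * (1 - p) * Θ * K‖ ≤ ‖H * (1 - p)‖ * ‖Θ‖ * ‖K‖ :=
        (norm_mul_le _ _).trans (mul_le_mul_of_nonneg_right (norm_mul_le _ _) (norm_nonneg _))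
    _ = _ := by ring

lemma exists_inverse_one_add [CompleteSpace A] [NormOneClass A] {η : A} (hη : ‖η‖ ≤ 1 / 2) :
    ∃ R : A, (1 + η) * R = 1 ∧ R * (1 + η) = 1 ∧ ‖R‖ ≤ 2 := by
  have h1 : ‖-η‖ < 1 := by rw [norm_neg]; linarith
  refine ⟨∑' n : ℕ, (-η) ^ n, ?_, ?_, ?_⟩
  · have := mul_neg_geom_series (-η) h1
    simpa using this
  · have := geom_series_mul_neg (-η) h1
    simpa using this
  · have := tsum_geometric_le_of_norm_lt_one (-η) h1
    rw [norm_one, norm_neg] at this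
    have h2 : (1 - ‖η‖)⁻¹ ≤ 2 := by
      rw [inv_le_comm₀ (by linarith) (by norm_num)]; linarith
    linarith

lemma IsGraph.stepU [CompleteSpace A] [NormOneClass A] {p u Xi Y Θ : A} {c : ℝ} (hc : 1 ≤ c)
    (hp : p * p = p) (hX1 : (p * u + (1 - p)) * Xi = 1) (hX2 : Xi * (p * u + (1 - p)) = 1)
    (np : ‖p‖ ≤ c) (np' : ‖1 - p‖ ≤ c) (nu : ‖u‖ ≤ c) (nX : ‖Xi‖ ≤ c)
    (hΘ : ‖Θ‖ * (4 * c ^ 4) ≤ 1)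
    (h : IsGraph p Y Θ) :
    ∃ Θ', IsGraph p (u * Y) Θ' ∧ ‖Θ'‖ ≤ 4 * c ^ 6 ∧
      ‖(1 - p) * u * p‖ ≤ ‖Θ'‖ * (2 * c ^ 3) + c ^ 2 * ‖Θ‖ := by
  obtain ⟨h1, h2, Z, Zi, h3, h4, h5⟩ := h
  have c0 : 0 ≤ c := by linarith
  have hΘ3 : ‖Θ‖ * c ^ 3 ≤ 1 / 4 := by
    have : c ^ 3 ≤ c ^ 4 := pow_le_pow_right₀ hc (by norm_num)
    nlinarith [norm_nonneg Θ]
  have hΘ0 : ‖Θ‖ ≤ c := by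
    have : 1 ≤ c ^ 3 := one_le_pow₀ hc
    nlinarith [norm_nonneg Θ]
  set q : A := 1 - p with hq
  have pq : p * q = 0 := by rw [hq, mul_sub, mul_one, hp, sub_self]
  have qp : q * p = 0 := by rw [hq, sub_mul, one_mul, hp, sub_self]
  have qq : q * q = q := by rw [hq, mul_sub, mul_one, ← hq, qp, sub_zero]
  have paq : p + q = 1 := by rw [hq]; abel
  set X : A := p * u + q with hX
  have nη : ‖Xi * (p * u * Θ)‖ ≤ 1 / 2 := by
    calc ‖Xi * (p * u * Θ)‖ ≤ ‖Xi‖ * (‖p‖ * ‖u‖ * ‖Θ‖) := by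
          refine (norm_mul_le _ _).trans (mul_le_mul_of_nonneg_left ?_ (norm_nonneg _))
          exact (norm_mul_le _ _).trans (mul_le_mul_of_nonneg_right (norm_mul_le _ _) (norm_nonneg _))
      _ ≤ c * (c * c * ‖Θ‖) := by gcongr
      _ = ‖Θ‖ * c ^ 3 := by ring
      _ ≤ 1 / 2 := by linarith
  obtain ⟨R, hR1, hR2, nR⟩ := exists_inverse_one_add nη
  set X' : A := X + p * u * Θ with hX'
  have hX'f : X' = X * (1 + Xi * (p * u * Θ)) := by
    rw [mul_add, mul_one, ← mul_assoc X, hX1, one_mul]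
  set Xi' : A := R * Xi with hXi'
  have i1 : X' * Xi' = 1 := by
    rw [hX'f, hXi', mul_assoc, ← mul_assoc _ R, hR1, one_mul, hX1]
  have i2 : Xi' * X' = 1 := by
    rw [hX'f, hXi', mul_assoc, ← mul_assoc Xi, hX2, one_mul, hR2]
  have nXi' : ‖Xi'‖ ≤ 2 * c := by
    calc ‖Xi'‖ ≤ ‖R‖ * ‖Xi‖ := norm_mul_le _ _
      _ ≤ 2 * c := by gcongr
  have qX' : q * X' = q := by
    rw [hX', hX, mul_add, mul_add, ← mul_assoc, ← mul_assoc, ← mul_assoc, qp, qq]; simp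
  have qXi' : q * Xi' = q := by
    calc q * Xi' = q * X' * Xi' := by rw [qX']
      _ = q := by rw [mul_assoc, i1, mul_one]
  set V : A := p * Xi' * p with hV
  set E : A := p * u * (p + Θ) with hE
  have hEX : E = X' * p := by
    rw [hE, hX', hX, add_mul, add_mul, qp, add_zero, mul_add, mul_assoc (p * u) Θ p, h2]
  have EV : E * V = p := by
    have : X' * p * Xi' = 1 - X' * q := by
      have : X' * (p + q) * Xi' = 1 := by rw [paq, mul_one, i1]
      rw [mul_add, add_mul, mul_assoc X' q, qXi'] at this
      exact eq_sub_of_add_eq this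
    rw [hEX, hV, mul_assoc p, ← mul_assoc (X' * p), mul_assoc X' p p, hp, ← mul_assoc, this, sub_mul, mul_assoc, qp]
    simp
  have VE : V * E = p := by
    have pX' : p * X' = X' - q := by
      have : (p + q) * X' = X' := by rw [paq, one_mul]
      rw [add_mul, qX'] at this
      exact eq_sub_of_add_eq this
    rw [hEX, hV, mul_assoc (p * Xi'), ← mul_assoc p X', pX', sub_mul, qp, sub_zero, mul_assoc p,
      ← mul_assoc Xi', i2, one_mul, hp]
  have nV : ‖V‖ ≤ 2 * c ^ 3 := by
    calc ‖V‖ ≤ ‖p‖ * ‖Xi'‖ * ‖p‖ :=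
          (norm_mul_le _ _).trans (mul_le_mul_of_nonneg_right (norm_mul_le _ _) (norm_nonneg _))
      _ ≤ c * (2 * c) * c := by gcongr
      _ = 2 * c ^ 3 := by ring
  have npΘ : ‖p + Θ‖ ≤ 2 * c := (norm_add_le _ _).trans (by linarith)
  have nE : ‖E‖ ≤ 2 * c ^ 3 := by
    calc ‖E‖ ≤ ‖p‖ * ‖u‖ * ‖p + Θ‖ :=
          (norm_mul_le _ _).trans (mul_le_mul_of_nonneg_right (norm_mul_le _ _) (norm_nonneg _))
      _ ≤ c * c * (2 * c) := by gcongr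
      _ = 2 * c ^ 3 := by ring
  have pV : p * V = V := by rw [hV, ← mul_assoc, ← mul_assoc, hp]
  have Vp : V * p = V := by rw [hV, mul_assoc, hp]
  have pΘp : (p + Θ) * p = p + Θ := by rw [add_mul, hp, h2]
  refine ⟨q * u * (p + Θ) * V, ⟨?_, ?_, E * Z, Zi * V, ?_, ?_, ?_⟩, ?_, ?_⟩
  · rw [show p * (q * u * (p + Θ) * V) = p * q * (u * (p + Θ) * V) by simp only [mul_assoc], pq,
      zero_mul]
  · rw [mul_assoc, Vp]
  · have e1 : q * u * (p + Θ) * V * (E * Z) = q * u * (p + Θ) * Z := by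
      rw [← mul_assoc, mul_assoc _ V E, VE, mul_assoc _ (p + Θ) p, pΘp]
    have e2 : p * (E * Z) = E * Z := by
      rw [hE, ← mul_assoc, ← mul_assoc, ← mul_assoc, hp]
    rw [add_mul, e1, e2, h3, hE, ← add_mul, ← add_mul, ← add_mul, paq, one_mul, mul_assoc]
  · rw [hE, ← mul_assoc, ← mul_assoc, ← mul_assoc, hp]
  · rw [mul_assoc, ← mul_assoc Z, h5, pV, EV]
  · calc ‖q * u * (p + Θ) * V‖ ≤ ‖q‖ * ‖u‖ * ‖p + Θ‖ * ‖V‖ := by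
          refine (norm_mul_le _ _).trans (mul_le_mul_of_nonneg_right ?_ (norm_nonneg _))
          exact (norm_mul_le _ _).trans (mul_le_mul_of_nonneg_right (norm_mul_le _ _) (norm_nonneg _))
      _ ≤ c * c * (2 * c) * (2 * c ^ 3) := by gcongr
      _ = 4 * c ^ 6 := by ring
  · have : q * u * p = q * u * (p + Θ) * V * E - q * u * Θ := by
      rw [mul_assoc _ V, VE, mul_assoc _ (p + Θ) p, pΘp, mul_add]; abel
    rw [this]
    refine (norm_sub_le _ _).trans (add_le_add ?_ ?_)
    · exact (norm_mul_le _ _).trans (mul_le_mul_of_nonneg_left nE (norm_nonneg _))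
    · calc ‖q * u * Θ‖ ≤ ‖q‖ * ‖u‖ * ‖Θ‖ :=
          (norm_mul_le _ _).trans (mul_le_mul_of_nonneg_right (norm_mul_le _ _) (norm_nonneg _))
        _ ≤ c * c * ‖Θ‖ := by gcongr
        _ = c ^ 2 * ‖Θ‖ := by ring

theorem pingpong [CompleteSpace A] [NormOneClass A] {p u H K Xi : A} {c : ℝ} (hc : 1 ≤ c)
    (hp : p * p = p) (hX1 : (p * u + (1 - p)) * Xi = 1) (hX2 : Xi * (p * u + (1 - p)) = 1)
    (np : ‖p‖ ≤ c) (np' : ‖1 - p‖ ≤ c) (nu : ‖u‖ ≤ c) (nX : ‖Xi‖ ≤ c)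
    (hHp : H * p = p * H) (hpK : p * K = K) (hKH : K * H = p) (hHK : H * K = p)
    (hgap : ‖H * (1 - p)‖ * ‖K‖ * (16 * c ^ 10) ≤ 1)
    (hlow : 1 ≤ c * ‖(1 - p) * u * p‖) (hHu : IsUnit H) (huu : IsUnit u) :
    ∀ w w' : List Bool, w.length = w'.length →
      (w.map fun c => if c then u * H else H).prod = (w'.map fun c => if c then u * H else H).prod →
      w = w' := by
  have c0 : 0 < c := by linarith
  have stepF : ∀ Y Θ, IsGraph p Y Θ → ‖Θ‖ ≤ 4 * c ^ 6 →
      ∃ Θ', IsGraph p (H * Y) Θ' ∧ ‖Θ'‖ * (4 * c ^ 4) ≤ 1 := by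
    intro Y Θ h hn
    refine ⟨_, h.stepH hHp hpK hKH hHK, ?_⟩
    calc ‖H * Θ * K‖ * (4 * c ^ 4) ≤ (‖H * (1 - p)‖ * ‖K‖ * (4 * c ^ 6)) * (4 * c ^ 4) := by
          gcongr
          exact (norm_stepH h.1).trans (by gcongr)
      _ = ‖H * (1 - p)‖ * ‖K‖ * (16 * c ^ 10) := by ring
      _ ≤ 1 := hgap
  have small : ∀ Θ : A, ‖Θ‖ * (4 * c ^ 4) ≤ 1 → ‖Θ‖ ≤ 4 * c ^ 6 := by
    intro Θ h
    have h4 : 1 ≤ c ^ 4 := one_le_pow₀ hc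
    have h6 : 1 ≤ c ^ 6 := one_le_pow₀ hc
    nlinarith [norm_nonneg Θ]
  have stepT : ∀ Y Θ, IsGraph p Y Θ → ‖Θ‖ ≤ 4 * c ^ 6 →
      ∃ Θ', IsGraph p (u * H * Y) Θ' ∧ ‖Θ'‖ ≤ 4 * c ^ 6 ∧ ¬ ‖Θ'‖ * (4 * c ^ 4) ≤ 1 := by
    intro Y Θ h hn
    obtain ⟨Θ1, g1, n1⟩ := stepF Y Θ h hn
    obtain ⟨Θ2, g2, n2, n3⟩ := g1.stepU hc hp hX1 hX2 np np' nu nX n1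
    refine ⟨Θ2, by rw [mul_assoc]; exact g2, n2, fun n4 => ?_⟩
    have e1 : c * ‖(1 - p) * u * p‖ ≤ c * (‖Θ2‖ * (2 * c ^ 3) + c ^ 2 * ‖Θ1‖) := by gcongr
    have e2 : c ^ 3 ≤ c ^ 4 := pow_le_pow_right₀ hc (by norm_num)
    have e3 : ‖Θ1‖ * c ^ 3 ≤ ‖Θ1‖ * c ^ 4 := by gcongr
    nlinarith
  have all : ∀ w : List Bool, ∃ Θ,
      IsGraph p ((w.map fun c => if c then u * H else H).prod * p) Θ ∧ ‖Θ‖ ≤ 4 * c ^ 6 := by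
    intro w
    induction w with
    | nil => exact ⟨0, ⟨by simp, by simp, p, p, by simp [hp], hp, hp⟩, by simp; positivity⟩
    | cons x w ih =>
      obtain ⟨Θ, g, n⟩ := ih
      cases x with
      | false =>
        obtain ⟨Θ', g', n'⟩ := stepF _ _ g n
        exact ⟨Θ', by simpa [mul_assoc] using g', small _ n'⟩
      | true =>
        obtain ⟨Θ', g', n', -⟩ := stepT _ _ g n
        exact ⟨Θ', by simpa [mul_assoc] using g', n'⟩
  have key : ∀ v v' : List Bool,
      H * (v.map fun c => if c then u * H else H).prod ≠
        u * H * (v'.map fun c => if c then u * H else H).prod := by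
    intro v v' h
    obtain ⟨Θ, g, n⟩ := all v
    obtain ⟨Θ', g', n'⟩ := all v'
    obtain ⟨Θ1, g1, n1⟩ := stepF _ _ g n
    obtain ⟨Θ2, g2, -, n2⟩ := stepT _ _ g' n'
    rw [← mul_assoc, ← h, mul_assoc] at g2
    rw [g1.unique hp g2] at n1
    exact n2 n1
  intro w
  induction w with
  | nil => intro w' h _; exact (List.length_eq_zero_iff.1 h.symm).symm
  | cons x w ih =>
    intro w' h e
    cases w' with
    | nil => simp at h
    | cons x' w' =>
      have hl : w.length = w'.length := by simpa using h
      cases x <;> cases x' <;> simp only [List.map_cons, List.prod_cons, if_true, Bool.false_eq_true, if_false] at e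
      · rw [ih w' hl (hHu.mul_left_cancel e)]
      · exact absurd e (key _ _)
      · exact absurd e.symm (key _ _)
      · rw [ih w' hl ((huu.mul hHu).mul_left_cancel e)]

end PingPong

open Matrix Filter

section Diag
variable {N : ℕ}

/-- Diagonalization data with distinct eigenvalues. -/
structure DiagData (h : Matrix (Fin N) (Fin N) ℂ) where
  lam : Fin N → ℂ
  inj : Function.Injective lam
  Q : Matrix (Fin N) (Fin N) ℂ
  Qi : Matrix (Fin N) (Fin N) ℂ
  QQi : Q * Qi = 1
  QiQ : Qi * Q = 1
  heq : h = Q * diagonal lam * Qi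

/-- Hankel matrix of the power traces. -/
def hankT {R : Type*} [CommRing R] (h : Matrix (Fin N) (Fin N) R) : Matrix (Fin N) (Fin N) R :=
  Matrix.of fun j k => trace (h ^ ((j : ℕ) + (k : ℕ)))

lemma diag_of_eigenvectors (h : Matrix (Fin N) (Fin N) ℂ) (lam : Fin N → ℂ)
    (inj : Function.Injective lam) (hv : ∀ a, ∃ v : Fin N → ℂ, v ≠ 0 ∧ h *ᵥ v = lam a • v) :
    ∃ D : DiagData h, D.lam = lam := by
  choose v hv0 hv using hv
  have hl : LinearIndependent ℂ v := by
    refine Module.End.eigenvectors_linearIndependent' (Matrix.toLin' h) lam inj v fun i => ?_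
    refine ⟨?_, hv0 i⟩
    rw [Module.End.mem_eigenspace_iff, Matrix.toLin'_apply, hv]
  let Q : Matrix (Fin N) (Fin N) ℂ := Matrix.of fun i a => v a i
  have hQ : IsUnit Q := by
    rw [← Matrix.linearIndependent_cols_iff_isUnit]; exact hl
  have hd := (Matrix.isUnit_iff_isUnit_det _).1 hQ
  refine ⟨⟨lam, inj, Q, Q⁻¹, mul_nonsing_inv _ hd, nonsing_inv_mul _ hd, ?_⟩, rfl⟩
  have : h * Q = Q * diagonal lam := by
    ext i a
    rw [mul_diagonal]
    have := congrFun (hv a) i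
    simp only [Pi.smul_apply, smul_eq_mul] at this
    rw [mul_comm]
    exact this
  rw [← this, mul_assoc, mul_nonsing_inv _ hd, mul_one]

open Polynomial in
lemma diag_of_hankel (h : Matrix (Fin N) (Fin N) ℂ) (hD : (hankT h).det ≠ 0) :
    Nonempty (DiagData h) := by
  set R := h.charpoly.roots.toFinset with hR
  have hsp : h.charpoly.Splits := IsAlgClosed.splits _
  have hcard : h.charpoly.roots.card = N := by
    rw [← hsp.natDegree_eq_card_roots, Matrix.charpoly_natDegree_eq_dim, Fintype.card_fin]
  have hRN : N ≤ R.card := by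
    by_contra hlt
    push Not at hlt
    set r : ℂ[X] := ∏ x ∈ R, (X - C x) with hr
    have hdeg : r.natDegree = R.card := by simp [hr]
    have hmon : r.Monic := monic_prod_of_monic _ _ fun x _ => monic_X_sub_C x
    have hdvd : h.charpoly ∣ r ^ N := by
      rw [hsp.eq_prod_roots_of_monic h.charpoly_monic, Finset.prod_multiset_map_count, hr,
        ← Finset.prod_pow]
      refine Finset.prod_dvd_prod_of_dvd _ _ fun x _ => pow_dvd_pow _ ?_
      exact (Multiset.count_le_card _ _).trans hcard.le
    have hnil : (aeval h r) ^ N = 0 := by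
      obtain ⟨s, hs⟩ := hdvd
      rw [← map_pow, hs, map_mul, Matrix.aeval_self_charpoly, zero_mul]
    have htr : ∀ j : ℕ, trace (h ^ j * aeval h r) = 0 := by
      intro j
      have hc : Commute (h ^ j) (aeval h r) := by
        have : h ^ j = aeval h (X ^ j : ℂ[X]) := by simp
        rw [this]
        exact (Commute.all (X ^ j : ℂ[X]) r).map (aeval h)
      exact (Matrix.isNilpotent_trace_of_isNilpotent (hc.isNilpotent_mul_left ⟨N, hnil⟩)).eq_zero
    apply hD
    refine Matrix.exists_mulVec_eq_zero_iff.1 ⟨fun k : Fin N => r.coeff k, ?_, ?_⟩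
    · intro h0
      have := congrFun h0 ⟨R.card, hlt⟩
      simp only [Pi.zero_apply] at this
      rw [← hdeg, hmon.coeff_natDegree] at this
      exact one_ne_zero this
    · ext j
      have := htr j
      rw [aeval_eq_sum_range' (hdeg.trans_lt hlt), Finset.mul_sum, trace_sum,
        Finset.sum_range] at this
      rw [Pi.zero_apply, ← this]
      simp only [Matrix.mulVec, dotProduct, hankT, Matrix.of_apply]
      refine Finset.sum_congr rfl fun k _ => ?_
      rw [mul_smul_comm, trace_smul, ← pow_add, smul_eq_mul, mul_comm]
  obtain ⟨R', hR', hc'⟩ := Finset.exists_subset_card_eq hRN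
  let e : Fin N ≃ R' := (Finset.equivFinOfCardEq hc').symm
  obtain ⟨D, -⟩ := diag_of_eigenvectors h (fun a => (e a : ℂ))
    (Subtype.val_injective.comp e.injective) (fun a => by
      have h1 : (e a : ℂ) ∈ R := hR' (e a).2
      have h2 : IsRoot h.charpoly (e a : ℂ) := by
        rw [hR, Multiset.mem_toFinset] at h1
        exact (Polynomial.mem_roots'.1 h1).2
      rw [← Matrix.mem_spectrum_iff_isRoot_charpoly, ← Matrix.spectrum_toLin',
        ← Module.End.hasEigenvalue_iff_mem_spectrum] at h2
      obtain ⟨v, hv, hv0⟩ := h2.exists_hasEigenvector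
      refine ⟨v, hv0, ?_⟩
      rw [Module.End.mem_eigenspace_iff, Matrix.toLin'_apply] at hv
      exact hv)
  exact ⟨D⟩

namespace DiagData
variable {h : Matrix (Fin N) (Fin N) ℂ} (D : DiagData h)

lemma conj_mul (A B : Matrix (Fin N) (Fin N) ℂ) :
    D.Q * A * D.Qi * (D.Q * B * D.Qi) = D.Q * (A * B) * D.Qi := by
  rw [show D.Q * A * D.Qi * (D.Q * B * D.Qi) = D.Q * A * (D.Qi * D.Q) * B * D.Qi by
    simp only [mul_assoc], D.QiQ]
  simp only [mul_assoc, mul_one]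

lemma conj_diag_pow (d : Fin N → ℂ) (j : ℕ) :
    (D.Q * diagonal d * D.Qi) ^ j = D.Q * diagonal (fun a => d a ^ j) * D.Qi := by
  induction j with
  | zero => simp [D.QQi]
  | succ j ih => rw [pow_succ, ih, D.conj_mul, diagonal_mul_diagonal]; simp only [pow_succ]

lemma trace_conj (A : Matrix (Fin N) (Fin N) ℂ) : trace (D.Q * A * D.Qi) = trace A := by
  rw [trace_mul_comm, ← mul_assoc, D.QiQ, one_mul]

lemma det_conj (A : Matrix (Fin N) (Fin N) ℂ) : det (D.Q * A * D.Qi) = det A := by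
  rw [det_mul_comm, ← mul_assoc, D.QiQ, one_mul]

lemma det_eq : det h = ∏ a, D.lam a := by
  conv_lhs => rw [D.heq]
  rw [D.det_conj, det_diagonal]

lemma trace_eq : trace h = ∑ a, D.lam a := by
  conv_lhs => rw [D.heq]
  rw [D.trace_conj, trace_diagonal]

lemma hankT_det : (hankT h).det = (vandermonde D.lam).det ^ 2 := by
  have : hankT h = (vandermonde D.lam)ᵀ * vandermonde D.lam := by
    ext j k
    simp only [hankT, of_apply, mul_apply, transpose_apply, vandermonde_apply]
    conv_lhs => rw [D.heq]
    rw [D.conj_diag_pow, D.trace_conj, trace_diagonal]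
    simp only [pow_add]
  rw [this, det_mul, det_transpose, sq]

/-- Spectral projection with weights `d`. -/
def fn (d : Fin N → ℂ) : Matrix (Fin N) (Fin N) ℂ := D.Q * diagonal d * D.Qi

lemma fn_mul (d d' : Fin N → ℂ) : D.fn d * D.fn d' = D.fn (fun a => d a * d' a) := by
  unfold fn; rw [D.conj_mul, diagonal_mul_diagonal]

lemma fn_pow (d : Fin N → ℂ) (j : ℕ) : D.fn d ^ j = D.fn (fun a => d a ^ j) := D.conj_diag_pow d j

lemma fn_add (d d' : Fin N → ℂ) : D.fn d + D.fn d' = D.fn (fun a => d a + d' a) := by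
  unfold fn; rw [← diagonal_add, mul_add, add_mul]

lemma fn_one : D.fn (fun _ => 1) = 1 := by
  unfold fn; rw [diagonal_one, mul_one, D.QQi]

lemma fn_lam : D.fn D.lam = h := D.heq.symm

/-- Indicator function. -/
def ind (I : Finset (Fin N)) (a : Fin N) : ℂ := if a ∈ I then 1 else 0

lemma one_sub_fn (d : Fin N → ℂ) : 1 - D.fn d = D.fn (fun a => 1 - d a) := by
  rw [sub_eq_iff_eq_add, D.fn_add, ← D.fn_one]; congr; ext a; ring

/-- The transversality minors. -/
noncomputable def delta (u : Matrix (Fin N) (Fin N) ℂ) (I : Finset (Fin N)) : ℂ :=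
  det (D.fn (ind I) * u + (1 - D.fn (ind I)))

lemma det_one_add_diag (d : Fin N → ℂ) (U : Matrix (Fin N) (Fin N) ℂ) :
    det (1 + diagonal d * U) =
      ∑ I : Finset (Fin N), (∏ a ∈ I, d a) * det (diagonal (ind I) * U + diagonal (fun a => 1 - ind I a)) := by
  have h1 : det (1 + diagonal d * U) = detRowAlternating ((diagonal d * U : Matrix _ _ ℂ) + (1 : Matrix _ _ ℂ)) := by
    rw [add_comm]; rfl
  rw [h1]
  have := (detRowAlternating (R := ℂ) (n := Fin N)).map_add_univ (diagonal d * U) (1 : Matrix _ _ ℂ)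
  refine this.trans (Finset.sum_congr rfl fun I _ => ?_)
  have h2 : (I.piecewise (diagonal d * U) (1 : Matrix (Fin N) (Fin N) ℂ) : Matrix _ _ ℂ) =
      diagonal (fun a => if a ∈ I then d a else 1) *
        (diagonal (ind I) * U + diagonal (fun a => 1 - ind I a)) := by
    ext a b
    rw [diagonal_mul, Matrix.add_apply, diagonal_mul]
    by_cases ha : a ∈ I
    · simp [Finset.piecewise, ha, ind, diagonal_apply]
    · simp [Finset.piecewise, ha, ind, diagonal_apply, one_apply]
  change det (I.piecewise (diagonal d * U) (1 : Matrix (Fin N) (Fin N) ℂ) : Matrix _ _ ℂ) = _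
  rw [h2, det_mul, det_diagonal]
  congr 1
  rw [Finset.prod_ite_mem, Finset.univ_inter]

lemma det_one_add_fn (d : Fin N → ℂ) (u : Matrix (Fin N) (Fin N) ℂ) :
    det (1 + u * D.fn d) = ∑ I : Finset (Fin N), (∏ a ∈ I, d a) * D.delta u I := by
  rw [det_one_add_mul_comm]
  have h1 : 1 + D.fn d * u = D.Q * (1 + diagonal d * (D.Qi * u * D.Q)) * D.Qi := by
    rw [mul_add, add_mul, mul_one, D.QQi, fn,
      show D.Q * (diagonal d * (D.Qi * u * D.Q)) * D.Qi = D.Q * diagonal d * D.Qi * u * (D.Q * D.Qi) by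
        simp only [mul_assoc], D.QQi, mul_one]
  rw [h1, D.det_conj, det_one_add_diag]
  refine Finset.sum_congr rfl fun I _ => ?_
  congr 1
  rw [delta, D.one_sub_fn]
  have h1 : D.fn (ind I) * u + D.fn (fun a => 1 - ind I a) =
      D.Q * (diagonal (ind I) * (D.Qi * u * D.Q) + diagonal (fun a => 1 - ind I a)) * D.Qi := by
    rw [mul_add, add_mul, fn, fn,
      show D.Q * (diagonal (ind I) * (D.Qi * u * D.Q)) * D.Qi = D.Q * diagonal (ind I) * D.Qi * u * (D.Q * D.Qi) by
        simp only [mul_assoc], D.QQi, mul_one]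
  rw [h1, D.det_conj]

end DiagData

/-- enumeration of the subsets -/
noncomputable def eIdx (I : Finset (Fin N)) : ℕ := (Fintype.equivFin (Finset (Fin N)) I : ℕ)

/-- Hankel matrix of the determinants `det (1 + u (h+t)^j)`. -/
noncomputable def hankF {R : Type*} [CommRing R] (t : ℕ) (h u : Matrix (Fin N) (Fin N) R) :
    Matrix (Finset (Fin N)) (Finset (Fin N)) R :=
  Matrix.of fun J K => det (1 + u * (h + (t : Matrix (Fin N) (Fin N) R)) ^ (eIdx J + eIdx K))

lemma hankT_map {R R' : Type*} [CommRing R] [CommRing R'] (f : R →+* R') (h : Matrix (Fin N) (Fin N) R) :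
    f (hankT h).det = (hankT (f.mapMatrix h)).det := by
  rw [RingHom.map_det]
  congr 1
  ext j k
  simp only [hankT, RingHom.mapMatrix_apply, map_apply, of_apply, AddMonoidHom.map_trace]
  rw [← RingHom.mapMatrix_apply, ← RingHom.mapMatrix_apply, map_pow]

lemma hankF_map {R R' : Type*} [CommRing R] [CommRing R'] (f : R →+* R') (t : ℕ)
    (h u : Matrix (Fin N) (Fin N) R) :
    f (hankF t h u).det = (hankF t (f.mapMatrix h) (f.mapMatrix u)).det := by
  rw [RingHom.map_det]
  congr 1
  ext J K
  simp only [hankF, RingHom.mapMatrix_apply f (Matrix.of _), map_apply, of_apply]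
  rw [RingHom.map_det, map_add, map_mul, map_pow, map_add, map_natCast, map_one]

namespace DiagData
variable {h : Matrix (Fin N) (Fin N) ℂ} (D : DiagData h)

noncomputable def mu (t : ℕ) (I : Finset (Fin N)) : ℂ := ∏ a ∈ I, (D.lam a + t)

noncomputable def WW (t : ℕ) : Matrix (Finset (Fin N)) (Finset (Fin N)) ℂ :=
  Matrix.of fun J I => D.mu t I ^ eIdx J

lemma hankF_det (t : ℕ) (u : Matrix (Fin N) (Fin N) ℂ) :
    (hankF t h u).det = (D.WW t).det ^ 2 * ∏ I, D.delta u I := by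
  have : hankF t h u = D.WW t * diagonal (D.delta u) * (D.WW t)ᵀ := by
    ext J K
    rw [mul_apply]
    simp only [hankF, of_apply, mul_diagonal, transpose_apply, WW]
    have h1 : h + (t : Matrix (Fin N) (Fin N) ℂ) = D.fn (fun a => D.lam a + t) := by
      rw [← D.fn_add, D.fn_lam]
      congr 1
      have : (fun _ : Fin N => (t : ℂ)) = fun a => (t : ℂ) * 1 := by ext; simp
      unfold fn
      rw [show diagonal (fun _ : Fin N => (t : ℂ)) = (t : Matrix (Fin N) (Fin N) ℂ) from rfl,
        (Nat.cast_commute t D.Q).eq.symm, mul_assoc, D.QQi, mul_one]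
    rw [h1, D.fn_pow, D.det_one_add_fn]
    refine Finset.sum_congr rfl fun I _ => ?_
    rw [Finset.prod_pow, ← mu, pow_add]; ring
  rw [this, det_mul, det_mul, det_transpose, det_diagonal]; ring

lemma WW_det_ne_zero {t : ℕ} (ht : Function.Injective (D.mu t)) : (D.WW t).det ≠ 0 := by
  let e := Fintype.equivFin (Finset (Fin N))
  have h1 : D.WW t = ((vandermonde (D.mu t ∘ e.symm))ᵀ).submatrix e e := by
    ext J I
    simp [WW, eIdx, e, vandermonde_apply]
  rw [h1, det_submatrix_equiv_self, det_transpose, det_vandermonde_ne_zero_iff]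
  exact ht.comp e.symm.injective

open Polynomial in
lemma exists_mu_injective : ∃ t : ℕ, Function.Injective (D.mu t) := by
  let P : Finset (Fin N) → ℂ[X] := fun I => ∏ a ∈ I, (X - C (-D.lam a))
  have hPinj : Function.Injective P := by
    intro I J hIJ
    have h1 : ∀ K, (P K).roots = K.val.map (fun a => -D.lam a) := by
      intro K
      simp only [P]
      rw [Polynomial.roots_prod _ _ (Finset.prod_ne_zero_iff.2 fun a _ => X_sub_C_ne_zero _)]
      simp [Multiset.bind_singleton]
    have h2 := congrArg roots hIJ
    rw [h1, h1] at h2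
    exact Finset.val_injective (Multiset.map_injective (fun a b hab => D.inj (neg_injective hab)) h2)
  let E : ℂ[X] := ∏ z ∈ (Finset.univ : Finset (Finset (Fin N) × Finset (Fin N))).filter (fun z => z.1 ≠ z.2), (P z.1 - P z.2)
  have hE : E ≠ 0 := Finset.prod_ne_zero_iff.2 fun z hz => sub_ne_zero.2 fun h => (Finset.mem_filter.1 hz).2 (hPinj h)
  have : ∃ t : ℕ, E.eval (t : ℂ) ≠ 0 := by
    by_contra hcon
    push Not at hcon
    apply hE
    refine Polynomial.eq_zero_of_infinite_isRoot _ ((Set.infinite_range_of_injective (Nat.cast_injective (R := ℂ))).mono ?_)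
    rintro _ ⟨t, rfl⟩
    exact hcon t
  obtain ⟨t, ht⟩ := this
  refine ⟨t, fun I J hIJ => ?_⟩
  by_contra hne
  rw [eval_prod, Finset.prod_ne_zero_iff] at ht
  apply ht (I, J) (by simp [hne])
  have : ∀ K, (P K).eval (t : ℂ) = D.mu t K := by
    intro K
    simp [P, mu, eval_prod, add_comm]
  rw [eval_sub, this, this, hIJ, sub_self]

lemma delta_self (I : Finset (Fin N)) : D.delta h I = ∏ a ∈ I, D.lam a := by
  rw [delta, D.one_sub_fn]
  nth_rewrite 2 [← D.fn_lam]
  rw [D.fn_mul, D.fn_add, fn, D.det_conj, det_diagonal]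
  rw [← Finset.prod_subset (Finset.subset_univ I)]
  · exact Finset.prod_congr rfl fun a ha => by simp [ind, ha]
  · intro a _ ha; simp [ind, ha]

end DiagData
end Diag

open Matrix Filter

lemma gap_lemma {N : ℕ} {T : ℝ} (hT : 1 < T) (f : Fin N → ℝ) (hf : ∀ a, 0 < f a)
    (hprod : ∏ a, f a = 1) (hbig : ∃ a, T ≤ f a) :
    ∃ I : Finset (Fin N), I.Nonempty ∧ (∃ b, b ∉ I) ∧
      ∀ a ∈ I, ∀ b, b ∉ I → f b ^ N * T ≤ f a ^ N := by
  classical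
  obtain ⟨a0, ha0⟩ := hbig
  let I : ℕ → Finset (Fin N) := fun k => Finset.univ.filter fun a => T ^ (N - k) ≤ f a ^ N
  have hmono : ∀ k, I k ⊆ I (k + 1) := by
    intro k a ha
    simp only [I, Finset.mem_filter, Finset.mem_univ, true_and] at ha ⊢
    exact (pow_le_pow_right₀ hT.le (by omega)).trans ha
  have hI0 : ∀ k, a0 ∈ I k := by
    intro k
    simp only [I, Finset.mem_filter, Finset.mem_univ, true_and]
    exact (pow_le_pow_right₀ hT.le (by omega)).trans (pow_le_pow_left₀ (by linarith) ha0 N)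
  have hN0 : N ≠ 0 := by rintro rfl; exact a0.elim0
  have hIN : ∃ b, b ∉ I N := by
    by_contra hcon
    push Not at hcon
    have h1 : ∀ a, 1 ≤ f a := by
      intro a
      have := hcon a
      simp only [I, Finset.mem_filter, Finset.mem_univ, true_and, Nat.sub_self, pow_zero] at this
      exact (one_le_pow_iff_of_nonneg (hf a).le hN0).1 this
    have h2 : (1 : ℝ) < ∏ a, f a := by
      calc (1 : ℝ) = ∏ a : Fin N, (1 : ℝ) := by simp
        _ < ∏ a, f a := Finset.prod_lt_prod (fun _ _ => one_pos) (fun a _ => h1 a)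
            ⟨a0, Finset.mem_univ _, by linarith⟩
    linarith
  have hle : ∀ k ≤ N, I k ⊆ I N := by
    intro k hk
    induction hk using Nat.decreasingInduction with
    | self => exact subset_rfl
    | of_succ k _ ih => exact (hmono k).trans ih
  have : ∃ k < N, I k = I (k + 1) := by
    by_contra hcon
    push Not at hcon
    have h1 : ∀ k ≤ N, k + 1 ≤ (I k).card := by
      intro k
      induction k with
      | zero => intro _; exact Finset.card_pos.2 ⟨a0, hI0 0⟩
      | succ k ih =>
        intro hk
        have h2 := Finset.card_lt_card (Finset.ssubset_iff_subset_ne.2 ⟨hmono k, hcon k (by omega)⟩)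
        have := ih (by omega)
        omega
    have h3 := h1 N le_rfl
    have h4 := Finset.card_le_univ (I N)
    rw [Fintype.card_fin] at h4
    omega
  obtain ⟨k, hk, hkk⟩ := this
  obtain ⟨b0, hb0⟩ := hIN
  refine ⟨I k, ⟨a0, hI0 k⟩, ⟨b0, fun h => hb0 (hle k hk.le h)⟩, fun a ha b hb => ?_⟩
  rw [hkk] at hb
  simp only [I, Finset.mem_filter, Finset.mem_univ, true_and, not_le] at ha hb
  have h5 : T ^ (N - (k + 1)) * T = T ^ (N - k) := by
    rw [← pow_succ]; congr 1; omega
  calc f b ^ N * T ≤ T ^ (N - (k + 1)) * T := by gcongr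
    _ ≤ _ := h5.trans_le ha

section Bounds

attribute [local instance] Matrix.linftyOpNormedRing Matrix.linftyOpNormedAlgebra
  Matrix.linftyOpNormedAddCommGroup

variable {κ : Type*} [Fintype κ] [DecidableEq κ]

lemma mnorm_entry_le (A : Matrix κ κ ℂ) (i j : κ) : ‖A i j‖ ≤ ‖A‖ := by
  have h := Matrix.linfty_opNNNorm_def A
  have h1 : ‖A i j‖₊ ≤ ‖A‖₊ := by
    rw [h]
    refine le_trans ?_ (Finset.le_sup (f := fun i => ∑ j, ‖A i j‖₊) (Finset.mem_univ i))
    exact Finset.single_le_sum (f := fun j => ‖A i j‖₊) (fun _ _ => zero_le) (Finset.mem_univ j)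
  exact_mod_cast h1

lemma mnorm_le_of_entries (A : Matrix κ κ ℂ) {B : ℝ} (hB0 : 0 ≤ B) (hB : ∀ i j, ‖A i j‖ ≤ B) :
    ‖A‖ ≤ Fintype.card κ * B := by
  lift B to NNReal using hB0
  have h1 : ‖A‖₊ ≤ Fintype.card κ * B := by
    rw [Matrix.linfty_opNNNorm_def A]
    refine Finset.sup_le fun i _ => ?_
    refine (Finset.sum_le_card_nsmul _ _ B fun j _ => by exact_mod_cast hB i j).trans ?_
    simp
  exact_mod_cast h1

lemma norm_det_le_of_entries (A : Matrix κ κ ℂ) {B : ℝ} (hB : ∀ i j, ‖A i j‖ ≤ B) :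
    ‖A.det‖ ≤ (Fintype.card κ).factorial * B ^ Fintype.card κ := by
  have := Matrix.det_le (abv := NormedField.toAbsoluteValue ℂ) (A := A) (x := B) hB
  rw [nsmul_eq_mul] at this
  exact this

lemma norm_adjugate_le_of_entries (A : Matrix κ κ ℂ) {B : ℝ} (hB1 : 1 ≤ B)
    (hB : ∀ i j, ‖A i j‖ ≤ B) (i j : κ) :
    ‖A.adjugate i j‖ ≤ (Fintype.card κ).factorial * B ^ Fintype.card κ := by
  rw [Matrix.adjugate_apply]
  refine norm_det_le_of_entries _ fun k l => ?_
  rw [Matrix.updateRow_apply]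
  split_ifs
  · by_cases hl : l = i
    · subst hl; simpa using hB1
    · rw [Pi.single_apply]; simp [hl]; linarith
  · exact hB k l

lemma nat_le_pow {T : ℝ} (hT : 2 ≤ T) (n : ℕ) : (n : ℝ) ≤ T ^ n := by
  calc (n : ℝ) ≤ 2 ^ n := by exact_mod_cast Nat.lt_two_pow_self.le
    _ ≤ T ^ n := pow_le_pow_left₀ (by norm_num) hT n

lemma mul_le_pow {T x y : ℝ} {a b : ℕ} (hT : 2 ≤ T) (hx : x ≤ T ^ a) (hy : y ≤ T ^ b)
    (hy0 : 0 ≤ y) : x * y ≤ T ^ (a + b) := by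
  rw [pow_add]
  exact mul_le_mul hx hy hy0 (by positivity)

lemma mono_pow {T x : ℝ} {a b : ℕ} (hT : 2 ≤ T) (hx : x ≤ T ^ a) (hab : a ≤ b) : x ≤ T ^ b :=
  hx.trans (pow_le_pow_right₀ (by linarith) hab)

lemma pow_le_pow' {T x : ℝ} {a : ℕ} (hx0 : 0 ≤ x) (hx : x ≤ T ^ a) (n : ℕ) :
    x ^ n ≤ T ^ (a * n) := by
  rw [pow_mul]; exact pow_le_pow_left₀ hx0 hx n

lemma add_le_pow {T x y : ℝ} {a b : ℕ} (hT : 2 ≤ T) (hx : x ≤ T ^ a) (hy : y ≤ T ^ b) :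
    x + y ≤ T ^ (a + b + 1) := by
  have h1 : x ≤ T ^ (a + b) := mono_pow hT hx (by omega)
  have h2 : y ≤ T ^ (a + b) := mono_pow hT hy (by omega)
  have h3 : 0 ≤ T ^ (a + b) := by positivity
  rw [pow_succ]
  nlinarith

/-- exponent for determinants of `m × m` matrices with entries at most `T^c` -/
def detExp (m c : ℕ) : ℕ := m.factorial + c * m

lemma norm_det_le_pow {T : ℝ} {c : ℕ} (hT : 2 ≤ T) (A : Matrix κ κ ℂ)
    (hA : ∀ i j, ‖A i j‖ ≤ T ^ c) : ‖A.det‖ ≤ T ^ detExp (Fintype.card κ) c := by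
  refine (norm_det_le_of_entries A hA).trans ?_
  exact mul_le_pow hT (nat_le_pow hT _) (by rw [pow_mul]) (by positivity)

lemma norm_adjugate_le_pow {T : ℝ} {c : ℕ} (hT : 2 ≤ T) (A : Matrix κ κ ℂ)
    (hA : ∀ i j, ‖A i j‖ ≤ T ^ c) (i j : κ) :
    ‖A.adjugate i j‖ ≤ T ^ detExp (Fintype.card κ) c := by
  refine (norm_adjugate_le_of_entries A (one_le_pow₀ (by linarith)) hA i j).trans ?_
  exact mul_le_pow hT (nat_le_pow hT _) (by rw [pow_mul]) (by positivity)

lemma mnorm_le_pow {T : ℝ} {c : ℕ} (hT : 2 ≤ T) (A : Matrix κ κ ℂ)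
    (hA : ∀ i j, ‖A i j‖ ≤ T ^ c) : ‖A‖ ≤ T ^ (Fintype.card κ + c) := by
  refine (mnorm_le_of_entries A (by positivity) hA).trans ?_
  exact mul_le_pow hT (nat_le_pow hT _) le_rfl (by positivity)

/-- sums of `Fintype` size -/
lemma sum_le_pow {ι : Type*} {T : ℝ} {c : ℕ} (hT : 2 ≤ T) (s : Finset ι)
    (f : ι → ℝ) (hf : ∀ i ∈ s, f i ≤ T ^ c) : ∑ i ∈ s, f i ≤ T ^ (s.card + c) := by
  refine (Finset.sum_le_card_nsmul _ _ _ hf).trans ?_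
  rw [nsmul_eq_mul]
  exact mul_le_pow hT (nat_le_pow hT _) le_rfl (by positivity)

end Bounds

open Matrix Filter

section Analytic

attribute [local instance] Matrix.linftyOpNormedRing Matrix.linftyOpNormedAlgebra
  Matrix.linftyOpNormedAddCommGroup

open scoped Kronecker in
lemma det_leftMulMatrix {N : ℕ} (b : Module.Basis (Fin N × Fin N) ℂ (Matrix (Fin N) (Fin N) ℂ))
    (X : Matrix (Fin N) (Fin N) ℂ) : (Algebra.leftMulMatrix b X).det = X.det ^ N := by
  rw [← Algebra.norm_eq_matrix_det, Algebra.norm_eq_matrix_det (Matrix.stdBasis ℂ (Fin N) (Fin N))]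
  have : Algebra.leftMulMatrix (Matrix.stdBasis ℂ (Fin N) (Fin N)) X = X ⊗ₖ (1 : Matrix (Fin N) (Fin N) ℂ) := by
    ext ⟨i, j⟩ ⟨k, l⟩
    rw [Algebra.leftMulMatrix_eq_repr_mul, Matrix.stdBasis_eq_single, Matrix.kroneckerMap_apply]
    simp [Matrix.stdBasis, Matrix.mul_apply, Matrix.single_apply, Matrix.one_apply]
    by_cases h : l = j
    · subst h; simp
    · simp [h, Ne.symm h]
  rw [this, Matrix.det_kronecker]
  simp

lemma DiagData.fn_smul {N : ℕ} {h : Matrix (Fin N) (Fin N) ℂ} (D : DiagData h) (c : ℂ) (d : Fin N → ℂ) :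
    D.fn (fun a => c * d a) = c • D.fn d := by
  unfold DiagData.fn
  rw [show diagonal (fun a => c * d a) = c • diagonal d from diagonal_smul c d,
    Matrix.mul_smul, Matrix.smul_mul]

/-- The quantitative data fed to the ping-pong argument. -/
structure AnaData (N C0 t : ℕ) (T : ℝ)
    (b : Module.Basis (Fin N × Fin N) ℂ (Matrix (Fin N) (Fin N) ℂ))
    (h : Matrix (Fin N) (Fin N) ℂ) : Prop where
  hN : 2 ≤ N
  hT : 2 ≤ T
  hh : ‖Algebra.leftMulMatrix b h‖ ≤ T ^ C0
  hb : ∀ i, ‖Algebra.leftMulMatrix b (b i)‖ ≤ T ^ C0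
  h1 : ∀ i, ‖b.repr 1 i‖ ≤ T ^ C0
  hdet : ‖h.det‖ = 1
  htr : N * T ≤ ‖h.trace‖
  hD : 1 ≤ ‖(hankT h).det‖
  hF : ∀ i, 1 ≤ ‖(hankF t h (b i)).det‖
  hub : ∀ i, IsUnit (b i)

namespace AnaData
variable {N C0 t : ℕ} {T : ℝ} {b : Module.Basis (Fin N × Fin N) ℂ (Matrix (Fin N) (Fin N) ℂ)}
  {h : Matrix (Fin N) (Fin N) ℂ} (A : AnaData N C0 t T b h) (D : DiagData h)

include A

lemma normOne : NormOneClass (Matrix (Fin N × Fin N) (Fin N × Fin N) ℂ) := by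
  have : Nonempty (Fin N × Fin N) := ⟨⟨⟨0, by have := A.hN; omega⟩, ⟨0, by have := A.hN; omega⟩⟩⟩
  exact Matrix.linfty_opNormOneClass

lemma norm_pow_le' (j : ℕ) : ‖Algebra.leftMulMatrix b h ^ j‖ ≤ T ^ (C0 * j) := by
  have := A.normOne
  exact (norm_pow_le _ _).trans (pow_le_pow' (norm_nonneg _) A.hh j)

lemma lam_le (a : Fin N) : ‖D.lam a‖ ≤ T ^ C0 := by
  refine le_trans ?_ A.hh
  set P := D.fn (Pi.single a 1) with hP
  have h1 : h * P = D.lam a • P := by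
    nth_rewrite 1 [← D.fn_lam]
    rw [hP, D.fn_mul]
    have : (fun c => D.lam c * (Pi.single a 1 : Fin N → ℂ) c) = fun c => D.lam a * (Pi.single a 1 : Fin N → ℂ) c := by
      ext c
      by_cases hc : c = a
      · subst hc; simp
      · simp [hc]
    rw [this, D.fn_smul]
  have h2 : P ≠ 0 := by
    intro h0
    have : diagonal (Pi.single a 1 : Fin N → ℂ) = 0 := by
      have h3 : D.Qi * P * D.Q = diagonal (Pi.single a 1 : Fin N → ℂ) := by
        rw [hP, DiagData.fn, show D.Qi * (D.Q * diagonal (Pi.single a 1 : Fin N → ℂ) * D.Qi) * D.Q =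
          (D.Qi * D.Q) * diagonal (Pi.single a 1 : Fin N → ℂ) * (D.Qi * D.Q) by simp only [mul_assoc], D.QiQ,
          one_mul, mul_one]
      rw [← h3, h0]; simp
    have := congrFun (congrFun this a) a
    simp at this
  have h3 : Algebra.leftMulMatrix b P ≠ 0 := fun h0 =>
    h2 (Algebra.leftMulMatrix_injective b (by rw [h0, map_zero]))
  have h4 : 0 < ‖Algebra.leftMulMatrix b P‖ := norm_pos_iff.2 h3
  have h5 : ‖D.lam a‖ * ‖Algebra.leftMulMatrix b P‖ ≤
      ‖Algebra.leftMulMatrix b h‖ * ‖Algebra.leftMulMatrix b P‖ := by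
    rw [← norm_smul, ← map_smul, ← h1, map_mul]
    exact norm_mul_le _ _
  exact le_of_mul_le_mul_right h5 h4

lemma lam_pow_le (a : Fin N) {j m : ℕ} (hj : j ≤ m) : ‖D.lam a ^ j‖ ≤ T ^ (C0 * m) := by
  rw [norm_pow]
  exact mono_pow A.hT (pow_le_pow' (norm_nonneg _) (A.lam_le D a) j) (Nat.mul_le_mul_left _ hj)

lemma one_le_det_vandermonde : 1 ≤ ‖(vandermonde D.lam).det‖ := by
  have h1 := A.hD
  rw [D.hankT_det, norm_pow] at h1
  exact (one_le_pow_iff_of_nonneg (norm_nonneg _) two_ne_zero).1 h1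

lemma fn_le (d : Fin N → ℂ) {x : ℝ} (hd : ∀ a, ‖d a‖ ≤ x) (hx : 0 ≤ x) :
    ‖Algebra.leftMulMatrix b (D.fn d)‖ ≤ T ^ (N + (N + (detExp N (C0 * N) + C0 * N))) * x := by
  set V := vandermonde D.lam with hV
  have hdV := A.one_le_det_vandermonde D
  have hdV0 : V.det ≠ 0 := fun h0 => by rw [← hV, h0] at hdV; norm_num at hdV
  have hVi : ∀ j a, ‖V⁻¹ j a‖ ≤ T ^ detExp N (C0 * N) := by
    intro j a
    rw [Matrix.inv_def, Matrix.smul_apply, norm_smul, Ring.inverse_eq_inv', norm_inv]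
    have h1 := norm_adjugate_le_pow (c := C0 * N) A.hT V
      (fun i j => A.lam_pow_le D i j.2.le) j a
    rw [Fintype.card_fin] at h1
    calc ‖V.det‖⁻¹ * ‖V.adjugate j a‖ ≤ 1 * ‖V.adjugate j a‖ := by
          gcongr; exact inv_le_one_of_one_le₀ hdV
      _ ≤ _ := by rw [one_mul]; exact h1
  have hP : D.fn d = ∑ j : Fin N, (∑ a, V⁻¹ j a * d a) • h ^ (j : ℕ) := by
    have h1 : ∀ j : Fin N, (∑ a, V⁻¹ j a * d a) • h ^ (j : ℕ) =
        D.Q * diagonal (fun c => (∑ a, V⁻¹ j a * d a) * D.lam c ^ (j : ℕ)) * D.Qi := by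
      intro j
      conv_lhs => rw [D.heq]
      rw [D.conj_diag_pow]
      exact (D.fn_smul _ _).symm
    rw [Finset.sum_congr rfl fun j _ => h1 j, ← Finset.sum_mul, ← Finset.mul_sum, DiagData.fn]
    congr 2
    ext i c
    rw [Matrix.sum_apply]
    by_cases hic : i = c
    · subst hic
      simp only [diagonal_apply_eq]
      have h2 : V *ᵥ (V⁻¹ *ᵥ d) = d := by
        rw [mulVec_mulVec, mul_nonsing_inv _ (isUnit_iff_ne_zero.2 hdV0), one_mulVec]
      have h3 := congrFun h2 i
      rw [← h3]
      simp only [mulVec, dotProduct, hV, vandermonde_apply]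
      exact Finset.sum_congr rfl fun j _ => mul_comm _ _
    · simp [hic]
  rw [hP, map_sum]
  have hterm : ∀ j : Fin N, ‖Algebra.leftMulMatrix b ((∑ a, V⁻¹ j a * d a) • h ^ (j : ℕ))‖ ≤
      T ^ (N + (detExp N (C0 * N) + C0 * N)) * x := by
    intro j
    rw [map_smul, norm_smul, map_pow]
    have h1 : ‖∑ a, V⁻¹ j a * d a‖ ≤ T ^ (N + detExp N (C0 * N)) * x := by
      refine (norm_sum_le _ _).trans ?_
      calc ∑ a, ‖V⁻¹ j a * d a‖ ≤ ∑ a : Fin N, T ^ detExp N (C0 * N) * x := by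
            refine Finset.sum_le_sum fun a _ => ?_
            rw [norm_mul]
            exact mul_le_mul (hVi j a) (hd a) (norm_nonneg _) (pow_nonneg (by linarith [A.hT]) _)
        _ = N * (T ^ detExp N (C0 * N)) * x := by simp; ring
        _ ≤ _ := by
            refine mul_le_mul_of_nonneg_right ?_ hx
            exact mul_le_pow A.hT (nat_le_pow A.hT N) le_rfl (pow_nonneg (by linarith [A.hT]) _)
    have h2 : ‖Algebra.leftMulMatrix b h ^ (j : ℕ)‖ ≤ T ^ (C0 * N) :=
      mono_pow A.hT (A.norm_pow_le' j) (Nat.mul_le_mul_left _ j.2.le)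
    calc _ ≤ (T ^ (N + detExp N (C0 * N)) * x) * T ^ (C0 * N) :=
          mul_le_mul h1 h2 (norm_nonneg _) (mul_nonneg (pow_nonneg (by linarith [A.hT]) _) hx)
      _ = _ := by rw [← add_assoc, pow_add _ (N + detExp N (C0 * N))]; ring
  calc _ ≤ ∑ j : Fin N, ‖Algebra.leftMulMatrix b ((∑ a, V⁻¹ j a * d a) • h ^ (j : ℕ))‖ :=
        norm_sum_le _ _
    _ ≤ ∑ j : Fin N, T ^ (N + (detExp N (C0 * N) + C0 * N)) * x :=
        Finset.sum_le_sum fun j _ => hterm j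
    _ = N * T ^ (N + (detExp N (C0 * N) + C0 * N)) * x := by simp; ring
    _ ≤ _ := by
        refine mul_le_mul_of_nonneg_right ?_ hx
        exact mul_le_pow A.hT (nat_le_pow A.hT N) le_rfl (pow_nonneg (by linarith [A.hT]) _)

/-- exponent for the spectral projections -/
def c1 (N C0 : ℕ) : ℕ := N + (N + (detExp N (C0 * N) + C0 * N))
/-- exponent for `p u + (1 - p)` -/
def c2 (N C0 : ℕ) : ℕ := c1 N C0 + C0 + c1 N C0 + 1
/-- exponent for its determinant -/
def c3 (N C0 : ℕ) : ℕ := detExp (N * N) (c2 N C0)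
/-- exponent for the Vandermonde-type determinant -/
noncomputable def c4 (N C0 t : ℕ) : ℕ :=
  detExp (Fintype.card (Finset (Fin N))) ((C0 + t + 1) * N * Fintype.card (Finset (Fin N)))
/-- exponent for the lower bound of the minors -/
noncomputable def c5 (N C0 t : ℕ) : ℕ := c4 N C0 t * 2 + c3 N C0 * Fintype.card (Finset (Fin N))
/-- exponent for the inverse of `p u + (1 - p)` -/
noncomputable def c6 (N C0 t : ℕ) : ℕ := c5 N C0 t * N + (N * N + c3 N C0)

lemma proj_le (I : Finset (Fin N)) :
    ‖Algebra.leftMulMatrix b (D.fn (DiagData.ind I))‖ ≤ T ^ c1 N C0 := by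
  have := A.fn_le D (DiagData.ind I) (x := 1) (fun a => by
    unfold DiagData.ind; split_ifs <;> simp) zero_le_one
  rwa [mul_one] at this

lemma proj'_le (I : Finset (Fin N)) :
    ‖Algebra.leftMulMatrix b (1 - D.fn (DiagData.ind I))‖ ≤ T ^ c1 N C0 := by
  rw [D.one_sub_fn]
  have := A.fn_le D (fun a => 1 - DiagData.ind I a) (x := 1) (fun a => by
    unfold DiagData.ind; split_ifs <;> simp) zero_le_one
  rwa [mul_one] at this

lemma X_le (i : Fin N × Fin N) (I : Finset (Fin N)) :
    ‖Algebra.leftMulMatrix b (D.fn (DiagData.ind I) * b i + (1 - D.fn (DiagData.ind I)))‖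
      ≤ T ^ c2 N C0 := by
  rw [map_add, map_mul]
  refine (norm_add_le _ _).trans (add_le_pow A.hT ?_ (A.proj'_le D I))
  exact (norm_mul_le _ _).trans (mul_le_pow A.hT (A.proj_le D I) (A.hb i) (norm_nonneg _))

lemma delta_le (i : Fin N × Fin N) (I : Finset (Fin N)) : ‖D.delta (b i) I‖ ≤ T ^ c3 N C0 := by
  have hT := A.hT
  have h1 := norm_det_le_pow A.hT _ (fun k l => (mnorm_entry_le _ k l).trans (A.X_le D i I))
  rw [det_leftMulMatrix, norm_pow, Fintype.card_prod, Fintype.card_fin] at h1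
  change ‖D.delta (b i) I‖ ^ N ≤ T ^ c3 N C0 at h1
  by_cases h2 : 1 ≤ ‖D.delta (b i) I‖
  · exact (le_self_pow₀ h2 (by have := A.hN; omega)).trans h1
  · exact (not_le.1 h2).le.trans (one_le_pow₀ (by linarith))

lemma WW_le : ‖(D.WW t).det‖ ≤ T ^ c4 N C0 t := by
  have hT := A.hT
  refine norm_det_le_pow A.hT _ fun J I => ?_
  have h1 : ‖D.mu t I‖ ≤ T ^ ((C0 + t + 1) * N) := by
    unfold DiagData.mu
    rw [norm_prod]
    calc ∏ a ∈ I, ‖D.lam a + t‖ ≤ ∏ a ∈ I, T ^ (C0 + t + 1) := by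
          refine Finset.prod_le_prod (fun _ _ => norm_nonneg _) fun a _ => ?_
          refine (norm_add_le _ _).trans (add_le_pow A.hT (A.lam_le D a) ?_)
          simpa using nat_le_pow A.hT t
      _ = (T ^ (C0 + t + 1)) ^ I.card := by simp
      _ ≤ _ := by
          rw [pow_mul]
          refine pow_le_pow_right₀ (one_le_pow₀ (by linarith)) ?_
          simpa using Finset.card_le_univ I
  simp only [DiagData.WW, of_apply, norm_pow]
  refine mono_pow A.hT (pow_le_pow' (norm_nonneg _) h1 _) (Nat.mul_le_mul_left _ ?_)
  exact (Fintype.equivFin (Finset (Fin N)) J).2.le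

lemma delta_ge (i : Fin N × Fin N) (I : Finset (Fin N)) :
    1 ≤ T ^ c5 N C0 t * ‖D.delta (b i) I‖ := by
  have hT := A.hT
  have h1 := A.hF i
  rw [D.hankF_det, norm_mul, norm_pow, norm_prod, ← Finset.mul_prod_erase _ _ (Finset.mem_univ I)] at h1
  refine h1.trans ?_
  have h2 : ∏ J ∈ Finset.univ.erase I, ‖D.delta (b i) J‖ ≤
      T ^ (c3 N C0 * Fintype.card (Finset (Fin N))) := by
    calc _ ≤ ∏ J ∈ Finset.univ.erase I, T ^ c3 N C0 :=
          Finset.prod_le_prod (fun _ _ => norm_nonneg _) fun J _ => A.delta_le D i J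
      _ = (T ^ c3 N C0) ^ (Finset.univ.erase I).card := by simp
      _ ≤ _ := by
          rw [pow_mul]
          refine pow_le_pow_right₀ (one_le_pow₀ (by linarith)) (Finset.card_le_univ _)
  have h3 : ‖(D.WW t).det‖ ^ 2 ≤ T ^ (c4 N C0 t * 2) := pow_le_pow' (norm_nonneg _) (A.WW_le D) 2
  calc _ = ‖(D.WW t).det‖ ^ 2 * (∏ J ∈ Finset.univ.erase I, ‖D.delta (b i) J‖) *
        ‖D.delta (b i) I‖ := by ring
    _ ≤ _ := by
      refine mul_le_mul_of_nonneg_right ?_ (norm_nonneg _)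
      exact mul_le_pow A.hT h3 h2 (Finset.prod_nonneg fun _ _ => norm_nonneg _)

lemma exists_inv (i : Fin N × Fin N) (I : Finset (Fin N)) :
    ∃ Xi, Algebra.leftMulMatrix b (D.fn (DiagData.ind I) * b i + (1 - D.fn (DiagData.ind I))) * Xi = 1 ∧
      Xi * Algebra.leftMulMatrix b (D.fn (DiagData.ind I) * b i + (1 - D.fn (DiagData.ind I))) = 1 ∧
      ‖Xi‖ ≤ T ^ c6 N C0 t := by
  have hT := A.hT
  set X := Algebra.leftMulMatrix b (D.fn (DiagData.ind I) * b i + (1 - D.fn (DiagData.ind I))) with hX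
  have hdet : X.det = D.delta (b i) I ^ N := by rw [hX, det_leftMulMatrix]; rfl
  have h1 := A.delta_ge D i I
  have hpos : 0 < ‖D.delta (b i) I‖ := by
    rcases (norm_nonneg (D.delta (b i) I)).eq_or_lt with h0 | h0
    · rw [← h0, mul_zero] at h1; linarith
    · exact h0
  have hu : IsUnit X.det := by
    rw [hdet]
    exact isUnit_iff_ne_zero.2 (pow_ne_zero _ (norm_pos_iff.1 hpos))
  refine ⟨X⁻¹, mul_nonsing_inv _ hu, nonsing_inv_mul _ hu, ?_⟩
  rw [Matrix.inv_def, norm_smul, Ring.inverse_eq_inv', norm_inv, hdet, norm_pow]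
  have h2 : (‖D.delta (b i) I‖ ^ N)⁻¹ ≤ T ^ (c5 N C0 t * N) := by
    rw [← inv_pow]
    refine pow_le_pow' (by positivity) ?_ N
    rwa [inv_le_iff_one_le_mul₀ hpos]
  have h3 : ‖X.adjugate‖ ≤ T ^ (N * N + c3 N C0) := by
    have h4 := mnorm_le_pow A.hT X.adjugate
      (norm_adjugate_le_pow A.hT X (fun k l => (mnorm_entry_le _ k l).trans (A.X_le D i I)))
    rw [Fintype.card_prod, Fintype.card_fin] at h4
    exact h4
  exact mul_le_pow A.hT h2 h3 (norm_nonneg _)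

lemma exists_mover (I : Finset (Fin N)) (hI : I.Nonempty) (hI' : ∃ b, b ∉ I) :
    ∃ i, 1 ≤ T ^ (N * N + C0) *
      ‖Algebra.leftMulMatrix b ((1 - D.fn (DiagData.ind I)) * b i * D.fn (DiagData.ind I))‖ := by
  have hT := A.hT
  obtain ⟨a, ha⟩ := hI
  obtain ⟨c, hc⟩ := hI'
  set p := D.fn (DiagData.ind I) with hp
  by_contra hcon
  push Not at hcon
  set X := D.Q * single c a 1 * D.Qi with hX
  have hX0 : X ≠ 0 := by
    intro h0
    have h3 : D.Qi * X * D.Q = single c a 1 := by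
      rw [hX, show D.Qi * (D.Q * single c a 1 * D.Qi) * D.Q =
          (D.Qi * D.Q) * single c a 1 * (D.Qi * D.Q) by simp only [mul_assoc], D.QiQ,
          one_mul, mul_one]
    rw [h0] at h3
    have := congrFun (congrFun h3 c) a
    simp at this
  have hpX : (1 - p) * X * p = X := by
    rw [hp, D.one_sub_fn, hX, DiagData.fn, DiagData.fn, D.conj_mul, D.conj_mul]
    congr 2
    ext k l
    rw [mul_diagonal, diagonal_mul, single_apply]
    split_ifs with hkl
    · obtain ⟨rfl, rfl⟩ := hkl
      simp [DiagData.ind, ha, hc]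
    · simp
  set Y := Algebra.leftMulMatrix b X with hY
  have hYpos : 0 < ‖Y‖ := norm_pos_iff.2 fun h0 =>
    hX0 (Algebra.leftMulMatrix_injective b (by rw [← hY, h0, map_zero]))
  have hrep : ∀ i, ‖b.repr X i‖ ≤ ‖Y‖ * T ^ C0 := by
    intro i
    have h1 := Algebra.leftMulMatrix_mulVec_repr b X 1
    rw [mul_one] at h1
    have h2 : b.repr X i = ∑ k, Y i k * b.repr 1 k := by
      rw [← h1]; rfl
    rw [h2]
    refine (norm_sum_le _ _).trans ?_
    have h3 : ∑ k, ‖Y i k‖ ≤ ‖Y‖ := by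
      have h := Matrix.linfty_opNNNorm_def Y
      have h1 : ∑ k, ‖Y i k‖₊ ≤ ‖Y‖₊ := by
        rw [h]
        exact Finset.le_sup (f := fun i => ∑ j, ‖Y i j‖₊) (Finset.mem_univ i)
      have h4 := NNReal.coe_le_coe.2 h1
      rw [NNReal.coe_sum] at h4
      exact h4
    calc ∑ k, ‖Y i k * b.repr 1 k‖ ≤ ∑ k, ‖Y i k‖ * T ^ C0 :=
          Finset.sum_le_sum fun k _ => by
            rw [norm_mul]; exact mul_le_mul_of_nonneg_left (A.h1 k) (norm_nonneg _)
      _ = (∑ k, ‖Y i k‖) * T ^ C0 := by rw [Finset.sum_mul]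
      _ ≤ _ := mul_le_mul_of_nonneg_right h3 (by positivity)
  have hsum : Y = ∑ i, b.repr X i • Algebra.leftMulMatrix b ((1 - p) * b i * p) := by
    have h1 : X = ∑ i, b.repr X i • ((1 - p) * b i * p) := by
      conv_lhs => rw [← hpX, ← b.sum_repr X]
      rw [Finset.mul_sum, Finset.sum_mul]
      refine Finset.sum_congr rfl fun i _ => ?_
      rw [Matrix.mul_smul, Matrix.smul_mul]
    conv_lhs => rw [hY, h1]
    rw [map_sum]
    exact Finset.sum_congr rfl fun i _ => map_smul _ _ _
  have hne : (Finset.univ : Finset (Fin N × Fin N)).Nonempty := ⟨(a, a), Finset.mem_univ _⟩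
  have hfin : ‖Y‖ < ‖Y‖ := by
    calc ‖Y‖ ≤ ∑ i, ‖b.repr X i • Algebra.leftMulMatrix b ((1 - p) * b i * p)‖ := by
          conv_lhs => rw [hsum]
          exact norm_sum_le _ _
      _ ≤ ∑ i, ‖Y‖ * (T ^ C0 * ‖Algebra.leftMulMatrix b ((1 - p) * b i * p)‖) := by
          refine Finset.sum_le_sum fun i _ => ?_
          rw [norm_smul, ← mul_assoc]
          exact mul_le_mul_of_nonneg_right (hrep i) (norm_nonneg _)
      _ < ∑ i : Fin N × Fin N, ‖Y‖ * (T ^ (N * N))⁻¹ := by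
          refine Finset.sum_lt_sum_of_nonempty hne fun i _ => ?_
          refine mul_lt_mul_of_pos_left ?_ hYpos
          have := hcon i
          rw [pow_add, mul_assoc] at this
          rwa [← one_div, lt_div_iff₀' (by positivity)]
      _ = (N * N : ℕ) * (T ^ (N * N))⁻¹ * ‖Y‖ := by simp; ring
      _ ≤ 1 * ‖Y‖ := by
          refine mul_le_mul_of_nonneg_right ?_ (norm_nonneg _)
          rw [← div_eq_mul_inv, div_le_one (by positivity)]
          exact nat_le_pow A.hT _
      _ = ‖Y‖ := one_mul _
  exact lt_irrefl _ hfin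

/-- exponent of the ping-pong constant -/
noncomputable def cc (N C0 t : ℕ) : ℕ := c1 N C0 + C0 + c6 N C0 t + N * N
/-- power used in the ping-pong argument -/
noncomputable def mm (N C0 t : ℕ) : ℕ := c1 N C0 + c1 N C0 + (4 + cc N C0 t * 10)

set_option maxHeartbeats 1000000 in
theorem free (D : DiagData h) : ∃ i, ∀ w w' : List Bool, w.length = w'.length →
    (w.map fun c => if c then b i * h ^ (N * mm N C0 t) else h ^ (N * mm N C0 t)).prod =
      (w'.map fun c => if c then b i * h ^ (N * mm N C0 t) else h ^ (N * mm N C0 t)).prod →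
    w = w' := by
  have := A.normOne
  have hT := A.hT
  have hN := A.hN
  have : CompleteSpace (Matrix (Fin N × Fin N) (Fin N × Fin N) ℂ) := FiniteDimensional.complete ℂ _
  have hprod : ∏ a, ‖D.lam a‖ = 1 := by rw [← norm_prod, ← D.det_eq, A.hdet]
  have hlam : ∀ a, 0 < ‖D.lam a‖ := by
    intro a
    rcases (norm_nonneg (D.lam a)).eq_or_lt with h0 | h0
    · rw [Finset.prod_eq_zero (Finset.mem_univ a) h0.symm] at hprod; norm_num at hprod
    · exact h0
  have hlam0 : ∀ a, D.lam a ≠ 0 := fun a => norm_pos_iff.1 (hlam a)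
  have hbig : ∃ a, T ≤ ‖D.lam a‖ := by
    by_contra hcon
    push Not at hcon
    have h1 := A.htr
    rw [D.trace_eq] at h1
    have h2 : ‖∑ a, D.lam a‖ < ∑ a : Fin N, T :=
      (norm_sum_le _ _).trans_lt (Finset.sum_lt_sum_of_nonempty
        ⟨⟨0, by omega⟩, Finset.mem_univ _⟩ fun a _ => hcon a)
    simp at h2
    linarith
  obtain ⟨I, hI, hI', hgap⟩ := gap_lemma (by linarith) (fun a => ‖D.lam a‖) hlam hprod hbig
  obtain ⟨i, hi⟩ := A.exists_mover D I hI hI'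
  obtain ⟨Xi, hX1, hX2, nX⟩ := A.exists_inv D i I
  set m := mm N C0 t with hm
  set n := N * m with hn
  set p := D.fn (DiagData.ind I) with hp
  set L := Algebra.leftMulMatrix b with hL
  have hpp : p * p = p := by
    rw [hp, D.fn_mul]; congr; ext a; simp [DiagData.ind]
  set K := D.fn (fun a => DiagData.ind I a * (D.lam a ^ n)⁻¹) with hK
  have hhn : h ^ n = D.fn (fun a => D.lam a ^ n) := by
    rw [← D.fn_pow, D.fn_lam]
  have hcc : ∀ {x : ℝ} {k : ℕ}, x ≤ T ^ k → k ≤ cc N C0 t → x ≤ T ^ cc N C0 t :=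
    fun hx hk => mono_pow hT hx hk
  have f1 : h ^ n * p = p * h ^ n := by
    rw [hhn, hp, D.fn_mul, D.fn_mul]
    exact congrArg D.fn (funext fun a => mul_comm _ _)
  have f2 : p * K = K := by
    rw [hK, hp, D.fn_mul]
    exact congrArg D.fn (funext fun a => by by_cases ha : a ∈ I <;> simp [DiagData.ind, ha])
  have f3 : K * h ^ n = p := by
    rw [hK, hhn, hp, D.fn_mul]
    refine congrArg D.fn (funext fun a => ?_)
    rw [mul_assoc, inv_mul_cancel₀ (pow_ne_zero _ (hlam0 a)), mul_one]
  have f4 : h ^ n * K = p := by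
    rw [hK, hhn, hp, D.fn_mul]
    refine congrArg D.fn (funext fun a => ?_)
    rw [mul_comm, mul_assoc, inv_mul_cancel₀ (pow_ne_zero _ (hlam0 a)), mul_one]
  have hgap' : ‖L (h ^ n) * (1 - L p)‖ * ‖L K‖ * (16 * (T ^ cc N C0 t) ^ 10) ≤ 1 := by
    obtain ⟨a, haI, ha⟩ := Finset.exists_min_image I (fun a => ‖D.lam a‖) hI
    have hIc : (Finset.univ.filter fun b => b ∉ I).Nonempty := by
      obtain ⟨b, hb⟩ := hI'; exact ⟨b, by simpa using hb⟩
    obtain ⟨c, hcI, hc⟩ := Finset.exists_max_image _ (fun a => ‖D.lam a‖) hIc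
    have hcI' : c ∉ I := by simpa using hcI
    have e1 : ‖L (h ^ n) * (1 - L p)‖ ≤ T ^ c1 N C0 * ‖D.lam c‖ ^ n := by
      rw [← map_one L, ← map_sub, ← map_mul, hp, D.one_sub_fn, hhn, D.fn_mul]
      refine A.fn_le D _ (fun x => ?_) (by positivity)
      by_cases hx : x ∈ I
      · simp [DiagData.ind, hx]
      · simp only [DiagData.ind, hx, if_false, sub_zero, mul_one, norm_pow]
        exact pow_le_pow_left₀ (norm_nonneg _) (hc x (by simpa using hx)) n
    have e2 : ‖L K‖ ≤ T ^ c1 N C0 * (‖D.lam a‖ ^ n)⁻¹ := by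
      refine A.fn_le D _ (fun x => ?_) (by positivity)
      by_cases hx : x ∈ I
      · simp only [DiagData.ind, hx, if_true, one_mul, norm_pow, norm_inv]
        have := hlam a
        gcongr
        exact ha x hx
      · simp [DiagData.ind, hx]
    have e3 : ‖D.lam c‖ ^ n * T ^ m ≤ ‖D.lam a‖ ^ n := by
      rw [hn, pow_mul, pow_mul, ← mul_pow]
      exact pow_le_pow_left₀ (by positivity) (hgap a haI c hcI') m
    have hla := hlam a
    have e4 : ‖D.lam c‖ ^ n * (‖D.lam a‖ ^ n)⁻¹ * T ^ m ≤ 1 := by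
      calc ‖D.lam c‖ ^ n * (‖D.lam a‖ ^ n)⁻¹ * T ^ m
          = (‖D.lam c‖ ^ n * T ^ m) * (‖D.lam a‖ ^ n)⁻¹ := by ring
        _ ≤ ‖D.lam a‖ ^ n * (‖D.lam a‖ ^ n)⁻¹ := by gcongr
        _ = 1 := mul_inv_cancel₀ (by positivity)
    have e5 : (16 : ℝ) ≤ T ^ 4 := by
      calc (16 : ℝ) = 2 ^ 4 := by norm_num
        _ ≤ T ^ 4 := pow_le_pow_left₀ (by norm_num) hT 4
    calc ‖L (h ^ n) * (1 - L p)‖ * ‖L K‖ * (16 * (T ^ cc N C0 t) ^ 10)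
        ≤ (T ^ c1 N C0 * ‖D.lam c‖ ^ n) * (T ^ c1 N C0 * (‖D.lam a‖ ^ n)⁻¹) *
          (T ^ 4 * (T ^ cc N C0 t) ^ 10) := by gcongr
      _ = ‖D.lam c‖ ^ n * (‖D.lam a‖ ^ n)⁻¹ * T ^ m := by
          rw [hm, mm, pow_add, pow_add, pow_add, pow_mul]; ring
      _ ≤ 1 := e4
  have key := pingpong (A := Matrix (Fin N × Fin N) (Fin N × Fin N) ℂ)
    (p := L p) (u := L (b i)) (H := L (h ^ n)) (K := L K) (Xi := Xi) (c := T ^ cc N C0 t)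
    (one_le_pow₀ (by linarith)) (by rw [← map_mul, hpp])
    (by rw [← map_mul, ← map_one L, ← map_sub, ← map_add, hX1, map_one])
    (by rw [← map_mul, ← map_one L, ← map_sub, ← map_add, hX2, map_one])
    (hcc (A.proj_le D I) (by unfold cc; omega))
    (by rw [← map_one L, ← map_sub]; exact hcc (A.proj'_le D I) (by unfold cc; omega))
    (hcc (A.hb i) (by unfold cc; omega))
    (hcc nX (by unfold cc; omega))
    (by rw [← map_mul, ← map_mul, f1]) (by rw [← map_mul, f2]) (by rw [← map_mul, f3])
    (by rw [← map_mul, f4]) hgap'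
    (by
      rw [← map_one L, ← map_sub, ← map_mul, ← map_mul]
      refine hi.trans (mul_le_mul_of_nonneg_right ?_ (norm_nonneg _))
      exact pow_le_pow_right₀ (by linarith) (by unfold cc; omega))
    (by
      refine IsUnit.map L (IsUnit.pow n ?_)
      rw [Matrix.isUnit_iff_isUnit_det, isUnit_iff_ne_zero, ← norm_pos_iff, A.hdet]
      exact one_pos)
    (IsUnit.map L (A.hub i))
  refine ⟨i, fun w w' hl he => key w w' hl ?_⟩
  have hmap : ∀ v : List Bool, (v.map fun c => if c then L (b i) * L (h ^ n) else L (h ^ n)).prod =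
      L (v.map fun c => if c then b i * h ^ n else h ^ n).prod := by
    intro v
    rw [map_list_prod, List.map_map]
    congr 1
    refine List.map_congr_left fun c _ => ?_
    cases c <;> simp
  rw [hmap, hmap, he]

end AnaData

end Analytic

open Matrix Filter

section FiniteQuot
variable {Γ F : Type*} [Group Γ] [Group F]

lemma InBall.map (φ : Γ →* F) {S : Set Γ} {n : ℕ} {x : Γ} (h : InBall S n x) :
    InBall (φ '' S) n (φ x) := by
  obtain ⟨w, hw, hw', rfl⟩ := h
  refine ⟨w.map φ, by simpa using hw, ?_, by rw [map_list_prod]⟩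
  intro y hy
  obtain ⟨x, hx, rfl⟩ := List.mem_map.1 hy
  rcases hw' x hx with h | h
  · exact Or.inl ⟨x, h, rfl⟩
  · exact Or.inr ⟨x⁻¹, h, by simp⟩

lemma InBall.lift (φ : Γ →* F) {S : Set Γ} {n : ℕ} {f : F} (h : InBall (φ '' S) n f) :
    ∃ x, InBall S n x ∧ φ x = f := by
  obtain ⟨w, hw, hw', rfl⟩ := h
  induction w generalizing n with
  | nil => exact ⟨1, InBall.one n, by simp⟩
  | cons y w ih =>
    obtain ⟨x, hx, hx'⟩ := ih (n := w.length) le_rfl (fun z hz => hw' z (List.mem_cons_of_mem _ hz))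
    have : ∃ s, (s ∈ S ∨ s⁻¹ ∈ S) ∧ φ s = y := by
      rcases hw' y List.mem_cons_self with ⟨s, hs, rfl⟩ | ⟨s, hs, hs'⟩
      · exact ⟨s, Or.inl hs, rfl⟩
      · exact ⟨s⁻¹, Or.inr (by simpa using hs), by rw [map_inv, hs', inv_inv]⟩
    obtain ⟨s, hs, rfl⟩ := this
    have h1 : InBall S 1 s := ⟨[s], by simp, by simpa using hs, by simp⟩
    refine ⟨s * x, (h1.mul hx).mono ?_, by simp [hx']⟩
    simpa [add_comm] using hw

lemma uniform_cover [Finite F] (φ : Γ →* F) : ∃ L, 1 ≤ L ∧ ∀ S : Finset Γ,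
    Subgroup.closure (S : Set Γ) = ⊤ → ∀ γ, ∃ x, InBall (S : Set Γ) L x ∧ φ x = φ γ := by
  classical
  have : ∃ L : Set F × F → ℕ, ∀ A f, (∃ n, InBall A n f) → InBall A (L (A, f)) f := by
    refine ⟨fun z => if h : ∃ n, InBall z.1 n z.2 then h.choose else 0, fun A f h => ?_⟩
    simp only [h, dif_pos]
    exact h.choose_spec
  obtain ⟨L, hL⟩ := this
  obtain ⟨M, hM⟩ := Set.finite_range L |>.bddAbove
  refine ⟨M + 1, by omega, fun S hS γ => ?_⟩
  obtain ⟨n, hn⟩ := InBall.of_closure hS γ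
  have h1 := (hL _ _ ⟨n, hn.map φ⟩).mono (n := M + 1) (by
    have := hM ⟨(φ '' (S : Set Γ), φ γ), rfl⟩; omega)
  exact h1.lift

end FiniteQuot

section Gram
variable {N : ℕ}

/-- Gram matrix for the trace form. -/
def tgram {R κ : Type*} [CommRing R] (b : κ → Matrix (Fin N) (Fin N) R) : Matrix κ κ R :=
  Matrix.of fun i j => trace (b i * b j)

lemma tgram_map {R R' κ : Type*} [Fintype κ] [DecidableEq κ] [CommRing R] [CommRing R'] (f : R →+* R')
    (b : κ → Matrix (Fin N) (Fin N) R) :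
    f (tgram b).det = (tgram fun i => f.mapMatrix (b i)).det := by
  rw [RingHom.map_det]
  congr 1
  ext j k
  simp only [tgram, RingHom.mapMatrix_apply f (Matrix.of _), map_apply, of_apply, ← map_mul]
  rw [RingHom.mapMatrix_apply, AddMonoidHom.map_trace]

lemma tgram_mulVec {κ : Type*} [Fintype κ] (b : κ → Matrix (Fin N) (Fin N) ℂ) (v : κ → ℂ) (k : κ) :
    (tgram b *ᵥ v) k = trace (b k * ∑ i, v i • b i) := by
  rw [Finset.mul_sum, trace_sum]
  refine Finset.sum_congr rfl fun i _ => ?_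
  rw [Matrix.mul_smul, trace_smul, smul_eq_mul, mul_comm]; rfl

lemma tgram_basis_ne_zero {κ : Type*} [Fintype κ] [DecidableEq κ]
    (b : Module.Basis κ ℂ (Matrix (Fin N) (Fin N) ℂ)) : (tgram b).det ≠ 0 := by
  intro h0
  obtain ⟨v, hv, hv'⟩ := Matrix.exists_mulVec_eq_zero_iff.2 h0
  apply hv
  have h1 : ∀ Y, trace (Y * ∑ i, v i • b i) = 0 := by
    intro Y
    rw [← b.sum_repr Y, Finset.sum_mul, trace_sum]
    refine Finset.sum_eq_zero fun k _ => ?_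
    rw [Matrix.smul_mul, trace_smul, ← tgram_mulVec, hv']; simp
  have h2 : ∑ i, v i • b i = 0 := by
    rw [Matrix.ext_iff_trace_mul_left]; intro Y; rw [h1]; simp
  have := Fintype.linearIndependent_iff.1 b.linearIndependent v h2
  exact funext this

lemma linearIndependent_of_tgram {κ : Type*} [Fintype κ] [DecidableEq κ]
    (b : κ → Matrix (Fin N) (Fin N) ℂ) (h : (tgram b).det ≠ 0) : LinearIndependent ℂ b := by
  rw [Fintype.linearIndependent_iff]
  intro v hv
  have h1 : tgram b *ᵥ v = 0 := by
    ext k; rw [tgram_mulVec, hv]; simp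
  exact congrFun (Matrix.eq_zero_of_mulVec_eq_zero h h1)

lemma exists_basis_of_tgram (b : Fin N × Fin N → Matrix (Fin N) (Fin N) ℂ) (h : (tgram b).det ≠ 0) :
    ∃ B : Module.Basis (Fin N × Fin N) ℂ (Matrix (Fin N) (Fin N) ℂ), ∀ i, B i = b i := by
  by_cases hN : N = 0
  · subst hN
    exact ⟨Matrix.stdBasis ℂ (Fin 0) (Fin 0), fun i => i.1.elim0⟩
  have : NeZero N := ⟨hN⟩
  refine ⟨basisOfLinearIndependentOfCardEqFinrank (linearIndependent_of_tgram b h) ?_, fun i => by rw [coe_basisOfLinearIndependentOfCardEqFinrank]⟩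
  simp [Module.finrank_matrix]

lemma repr_eq_tgram {κ : Type*} [Fintype κ] [DecidableEq κ]
    (b : Module.Basis κ ℂ (Matrix (Fin N) (Fin N) ℂ)) (X : Matrix (Fin N) (Fin N) ℂ) (i : κ) :
    b.repr X i = ∑ k, (tgram b)⁻¹ i k * trace (b k * X) := by
  have h1 : tgram b *ᵥ (fun i => b.repr X i) = fun k => trace (b k * X) := by
    ext k; rw [tgram_mulVec, b.sum_repr]
  have h2 : (tgram b)⁻¹ *ᵥ (tgram b *ᵥ (fun i => b.repr X i)) = fun i => b.repr X i := by
    rw [mulVec_mulVec, nonsing_inv_mul _ (isUnit_iff_ne_zero.2 (tgram_basis_ne_zero b)), one_mulVec]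
  rw [h1] at h2
  exact (congrFun h2 i).symm

end Gram

section Reduction
variable {N : ℕ}

/-- reduction of integer matrices modulo `q` -/
def redq (N q : ℕ) : Matrix (Fin N) (Fin N) ℤ →+* Matrix (Fin N) (Fin N) (ZMod q) :=
  (Int.castRingHom (ZMod q)).mapMatrix

/-- integer matrices as complex matrices -/
noncomputable def cst (N : ℕ) : Matrix (Fin N) (Fin N) ℤ →+* Matrix (Fin N) (Fin N) ℂ :=
  (Int.castRingHom ℂ).mapMatrix

lemma redq_eq_iff (q : ℕ) (M M' : Matrix (Fin N) (Fin N) ℤ) :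
    redq N q M = redq N q M' ↔ ∀ i j, (q : ℤ) ∣ M' i j - M i j := by
  rw [← Matrix.ext_iff]
  refine forall_congr' fun i => forall_congr' fun j => ?_
  exact ZMod.intCast_eq_intCast_iff_dvd_sub _ _ _

lemma redq_mono {q q' : ℕ} (h : q ∣ q') {M M' : Matrix (Fin N) (Fin N) ℤ}
    (hM : redq N q' M = redq N q' M') : redq N q M = redq N q M' := by
  rw [redq_eq_iff] at hM ⊢
  exact fun i j => (Int.natCast_dvd_natCast.2 h).trans (hM i j)

lemma ne_zero_of_cast_eq {q : ℕ} {x y : ℤ} (hxy : (x : ZMod q) = y) (hy : y ≠ 0)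
    (hyq : y.natAbs < q) : x ≠ 0 := by
  rintro rfl
  rw [ZMod.intCast_eq_intCast_iff_dvd_sub, sub_zero] at hxy
  have := Nat.le_of_dvd (Int.natAbs_pos.2 hy) (Int.natCast_dvd.1 hxy)
  omega

lemma natAbs_ge_of_cast_eq {q : ℕ} {x y : ℤ} (hxy : (x : ZMod q) = y) (hy : 0 ≤ y)
    (hyq : 2 * y < q) : y ≤ |x| := by
  rw [ZMod.intCast_eq_intCast_iff_dvd_sub] at hxy
  obtain ⟨k, hk⟩ := hxy
  by_contra hcon
  push Not at hcon
  have h1 := abs_lt.1 hcon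
  have hk0 : 0 < k := by
    by_contra h0
    push Not at h0
    nlinarith
  nlinarith

lemma one_le_norm_intCast {x : ℤ} (hx : x ≠ 0) : (1 : ℝ) ≤ ‖(x : ℂ)‖ := by
  rw [Complex.norm_intCast]
  exact_mod_cast Int.one_le_abs hx

lemma norm_det_cst {M : Matrix (Fin N) (Fin N) ℤ} (hM : IsUnit M) : ‖(cst N M).det‖ = 1 := by
  have h1 := (Matrix.isUnit_iff_isUnit_det _).1 hM
  rw [cst, ← RingHom.map_det]
  rcases Int.isUnit_iff.1 h1 with h | h <;> simp [h]

end Reduction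

open Matrix Filter

section Quant
attribute [local instance] Matrix.linftyOpNormedRing Matrix.linftyOpNormedAlgebra
  Matrix.linftyOpNormedAddCommGroup
variable {N : ℕ}

/-- exponent controlling coordinates in a trace-dual way -/
def reprExp (N : ℕ) : ℕ := N * N + detExp (N * N) 1

/-- exponent controlling left multiplication by a letter -/
def letExp (N : ℕ) : ℕ := N * N + (reprExp N + 1)

lemma repr_bound {T : ℝ} (hT : 2 ≤ T) (b : Module.Basis (Fin N × Fin N) ℂ (Matrix (Fin N) (Fin N) ℂ))
    (hdet : 1 ≤ ‖(tgram b).det‖) (hG : ∀ i j, ‖trace (b i * b j)‖ ≤ T)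
    {x : ℕ} (X : Matrix (Fin N) (Fin N) ℂ) (hX : ∀ k, ‖trace (b k * X)‖ ≤ T ^ x) (i : Fin N × Fin N) :
    ‖b.repr X i‖ ≤ T ^ (reprExp N + x) := by
  rw [repr_eq_tgram]
  refine (norm_sum_le _ _).trans ?_
  have h1 : ∀ k, ‖(tgram b)⁻¹ i k‖ ≤ T ^ detExp (N * N) 1 := by
    intro k
    rw [Matrix.inv_def, Matrix.smul_apply, norm_smul, Ring.inverse_eq_inv', norm_inv]
    have h1 := norm_adjugate_le_pow (c := 1) hT (tgram b)
      (fun i j => by rw [pow_one]; exact hG i j) i k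
    rw [Fintype.card_prod, Fintype.card_fin] at h1
    calc ‖(tgram b).det‖⁻¹ * ‖(tgram b).adjugate i k‖ ≤ 1 * ‖(tgram b).adjugate i k‖ := by
          gcongr; exact inv_le_one_of_one_le₀ hdet
      _ ≤ _ := by rw [one_mul]; exact h1
  have h2 := sum_le_pow hT Finset.univ (fun k => ‖(tgram b)⁻¹ i k * trace (b k * X)‖)
    (c := detExp (N * N) 1 + x) (fun k _ => by
      rw [norm_mul]; exact mul_le_pow hT (h1 k) (hX k) (norm_nonneg _))
  simpa [reprExp, add_assoc] using h2

lemma letter_bound {T : ℝ} (hT : 2 ≤ T) (b : Module.Basis (Fin N × Fin N) ℂ (Matrix (Fin N) (Fin N) ℂ))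
    (hdet : 1 ≤ ‖(tgram b).det‖) (hG : ∀ i j, ‖trace (b i * b j)‖ ≤ T)
    (X : Matrix (Fin N) (Fin N) ℂ) (hX : ∀ k j, ‖trace (b k * (X * b j))‖ ≤ T) :
    ‖Algebra.leftMulMatrix b X‖ ≤ T ^ letExp N := by
  have h1 := mnorm_le_pow hT (Algebra.leftMulMatrix b X) (c := reprExp N + 1) (fun i j => by
    rw [Algebra.leftMulMatrix_eq_repr_mul]
    exact repr_bound hT b hdet hG _ (fun k => by rw [pow_one]; exact hX k j) i)
  simpa [letExp] using h1

lemma exists_big_eigen {T : ℝ} (hN : 2 ≤ N) (hT : (N : ℝ) ^ 2 ≤ T) (w : Matrix (Fin N) (Fin N) ℂ)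
    (hw : T ≤ ‖trace w‖) : ∃ (ν : ℂ) (v : Fin N → ℂ), v ≠ 0 ∧ w *ᵥ v = ν • v ∧ T ≤ ‖ν‖ ^ 2 := by
  have hNpos : (0:ℝ) < N := by positivity
  have hTpos : 0 < T := lt_of_lt_of_le (by positivity) hT
  have h1 : ∃ ν ∈ w.charpoly.roots, T ≤ N * ‖ν‖ := by
    by_contra hcon
    push Not at hcon
    rw [Matrix.trace_eq_sum_roots_charpoly] at hw
    have hcard : w.charpoly.roots.card = N := by
      rw [← (IsAlgClosed.splits w.charpoly).natDegree_eq_card_roots, Matrix.charpoly_natDegree_eq_dim]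
      simp
    have h2 : ‖w.charpoly.roots.sum‖ ≤ (w.charpoly.roots.map fun x => ‖x‖).sum :=
      norm_multiset_sum_le _
    have h3 : (w.charpoly.roots.map fun x => ‖x‖).sum < (w.charpoly.roots.map fun _ => T / N).sum := by
      refine Multiset.sum_lt_sum_of_nonempty ?_ fun x hx => ?_
      · intro h0; rw [h0] at hcard; simp at hcard; omega
      · rw [lt_div_iff₀ hNpos, mul_comm]; exact hcon x hx
    rw [Multiset.map_const', Multiset.sum_replicate, hcard, nsmul_eq_mul, mul_div_cancel₀ _ hNpos.ne'] at h3
    linarith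
  obtain ⟨ν, hν, hνT⟩ := h1
  have h2 : w.charpoly.IsRoot ν := (Polynomial.mem_roots'.1 hν).2
  rw [Polynomial.IsRoot, Matrix.eval_charpoly] at h2
  obtain ⟨v, hv, hv'⟩ := Matrix.exists_mulVec_eq_zero_iff.2 h2
  refine ⟨ν, v, hv, ?_, ?_⟩
  · rw [sub_mulVec, sub_eq_zero] at hv'
    rw [← hv']
    simp [Matrix.scalar_apply, ← Matrix.smul_one_eq_diagonal, Matrix.smul_mulVec]
  · have h3 : T ^ 2 ≤ (N:ℝ) ^ 2 * ‖ν‖ ^ 2 := by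
      rw [← mul_pow]; exact pow_le_pow_left₀ hTpos.le hνT 2
    have h4 : (N:ℝ) ^ 2 * ‖ν‖ ^ 2 ≤ T * ‖ν‖ ^ 2 := by gcongr
    have h5 : T * T ≤ T * ‖ν‖ ^ 2 := by nlinarith
    exact le_of_mul_le_mul_left h5 hTpos

lemma eigen_pow_le (b : Module.Basis (Fin N × Fin N) ℂ (Matrix (Fin N) (Fin N) ℂ))
    (w : Matrix (Fin N) (Fin N) ℂ) (ν : ℂ) (v : Fin N → ℂ) (hv : v ≠ 0) (hw : w *ᵥ v = ν • v) (m : ℕ) :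
    ‖ν‖ ^ m ≤ ‖Algebra.leftMulMatrix b (w ^ m)‖ := by
  have hm : (w ^ m) *ᵥ v = ν ^ m • v := by
    induction m with
    | zero => simp
    | succ m ih => rw [pow_succ, ← mulVec_mulVec, hw, mulVec_smul, ih, smul_smul, pow_succ, mul_comm]
  set P : Matrix (Fin N) (Fin N) ℂ := vecMulVec v v with hP
  have h1 : w ^ m * P = ν ^ m • P := by
    rw [hP, Matrix.mul_vecMulVec, hm]
    ext i j; simp [vecMulVec_apply, mul_assoc]
  have h2 : P ≠ 0 := by
    intro h0
    apply hv
    ext i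
    have := congrFun (congrFun h0 i) i
    simpa [hP, vecMulVec_apply] using this
  have h3 : Algebra.leftMulMatrix b P ≠ 0 := fun h0 =>
    h2 (Algebra.leftMulMatrix_injective b (by rw [h0, map_zero]))
  have h4 : 0 < ‖Algebra.leftMulMatrix b P‖ := norm_pos_iff.2 h3
  have h5 : ‖ν ^ m‖ * ‖Algebra.leftMulMatrix b P‖ ≤
      ‖Algebra.leftMulMatrix b (w ^ m)‖ * ‖Algebra.leftMulMatrix b P‖ := by
    rw [← norm_smul, ← map_smul, ← h1, map_mul]
    exact norm_mul_le _ _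
  rw [← norm_pow]
  exact le_of_mul_le_mul_right h5 h4

/-- key estimate: a big trace appears among `b k * w ^ m`. -/
lemma exists_big_trace {T : ℝ} (hN : 2 ≤ N) (hT : (N : ℝ) ^ 2 ≤ T)
    (b : Module.Basis (Fin N × Fin N) ℂ (Matrix (Fin N) (Fin N) ℂ))
    (hdet : 1 ≤ ‖(tgram b).det‖) (hG : ∀ i j, ‖trace (b i * b j)‖ ≤ T)
    {c : ℕ} (hb : ∀ i, ‖Algebra.leftMulMatrix b (b i)‖ ≤ T ^ c)
    (w : Matrix (Fin N) (Fin N) ℂ) (hw : T ≤ ‖trace w‖) {e : ℕ} (he : 1 ≤ e) :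
    ∃ k, N * T ≤ ‖trace (b k * w ^ (2 * (e * (N * N + (reprExp N + 2 + c) + 1))))‖ := by
  have hN2 : (2:ℝ) ≤ N := by exact_mod_cast hN
  have hT2 : 2 ≤ T := by nlinarith
  have hNT : N * T ≤ T ^ 2 := by nlinarith
  set K := N * N + (reprExp N + 2 + c) + 1 with hK
  set m := 2 * (e * K) with hm
  by_contra hcon
  push Not at hcon
  obtain ⟨ν, v, hv, hwv, hν⟩ := exists_big_eigen hN hT w hw
  have h1 := eigen_pow_le b w ν v hv hwv m
  have h2 : ‖Algebra.leftMulMatrix b (w ^ m)‖ ≤ T ^ (N * N + (reprExp N + 2 + c)) := by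
    conv_lhs => rw [← b.sum_repr (w ^ m), map_sum]
    refine (norm_sum_le _ _).trans ?_
    have h3 := sum_le_pow hT2 Finset.univ
      (fun i => ‖Algebra.leftMulMatrix b (b.repr (w ^ m) i • b i)‖) (c := reprExp N + 2 + c) (fun i _ => by
        rw [map_smul, norm_smul]
        exact mul_le_pow hT2 (repr_bound hT2 b hdet hG _ (fun k => ((hcon k).le.trans hNT)) i) (hb i)
          (norm_nonneg _))
    simpa using h3
  have h3 : T ^ K ≤ ‖ν‖ ^ m := by
    rw [hm, pow_mul]
    calc T ^ K ≤ T ^ (e * K) := pow_le_pow_right₀ (by linarith) (by nlinarith)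
      _ ≤ _ := pow_le_pow_left₀ (by linarith) hν _
  have h4 : T ^ (N * N + (reprExp N + 2 + c)) < T ^ K := pow_lt_pow_right₀ (by linarith) (by omega)
  linarith

end Quant

open Matrix Filter

section Core
attribute [local instance] Matrix.linftyOpNormedRing Matrix.linftyOpNormedAlgebra
  Matrix.linftyOpNormedAddCommGroup
variable {N : ℕ}

lemma redq_trace {q : ℕ} {M M' : Matrix (Fin N) (Fin N) ℤ} (h : redq N q M = redq N q M') :
    ((trace M : ℤ) : ZMod q) = (trace M' : ℤ) := by
  have h1 : ∀ X : Matrix (Fin N) (Fin N) ℤ, ((trace X : ℤ) : ZMod q) = trace (redq N q X) := by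
    intro X
    rw [redq, RingHom.mapMatrix_apply]
    simp [trace]
  rw [h1, h1, h]

lemma core_stage1 (M0 : Matrix (Fin N) (Fin N) ℤ) (hu : IsUnit M0) (D0 : DiagData (cst N M0))
    (htr : (N : ℤ) ^ 2 ≤ trace M0) : ∃ t q1 : ℕ, 1 ≤ q1 ∧ ∀ M U : Matrix (Fin N) (Fin N) ℤ,
      redq N q1 M = redq N q1 M0 → redq N q1 U = redq N q1 M0 →
      (hankT M).det ≠ 0 ∧ (hankF t M U).det ≠ 0 ∧ (N : ℤ) ^ 2 ≤ |trace M| := by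
  obtain ⟨t, ht⟩ := D0.exists_mu_injective
  have hlam : ∀ a, D0.lam a ≠ 0 := by
    have h1 := norm_det_cst hu
    rw [D0.det_eq] at h1
    intro a ha
    rw [Finset.prod_eq_zero (Finset.mem_univ a) ha] at h1
    simp at h1
  have hD1 : (hankT M0).det ≠ 0 := by
    intro h0
    have h1 := hankT_map (Int.castRingHom ℂ) M0
    rw [h0, map_zero] at h1
    change 0 = (hankT (cst N M0)).det at h1
    rw [D0.hankT_det] at h1
    exact pow_ne_zero 2 (det_vandermonde_ne_zero_iff.2 D0.inj) h1.symm
  have hF : (hankF t M0 M0).det ≠ 0 := by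
    intro h0
    have h1 := hankF_map (Int.castRingHom ℂ) t M0 M0
    rw [h0, map_zero] at h1
    change 0 = (hankF t (cst N M0) (cst N M0)).det at h1
    rw [D0.hankF_det] at h1
    refine mul_ne_zero (pow_ne_zero 2 (D0.WW_det_ne_zero ht)) ?_ h1.symm
    refine Finset.prod_ne_zero_iff.2 fun I _ => ?_
    rw [D0.delta_self]
    exact Finset.prod_ne_zero_iff.2 fun a _ => hlam a
  set q1 : ℕ := 2 * (trace M0).natAbs + (hankT M0).det.natAbs + (hankF t M0 M0).det.natAbs + 1 with hq1
  refine ⟨t, q1, by omega, fun M U hM hU => ⟨?_, ?_, ?_⟩⟩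
  · refine ne_zero_of_cast_eq (q := q1) (y := (hankT M0).det) ?_ hD1 (by omega)
    have h1 := hankT_map (Int.castRingHom (ZMod q1)) M
    have h2 := hankT_map (Int.castRingHom (ZMod q1)) M0
    change _ = (hankT (redq N q1 M)).det at h1
    change _ = (hankT (redq N q1 M0)).det at h2
    rw [hM, ← h2] at h1
    exact h1
  · refine ne_zero_of_cast_eq (q := q1) (y := (hankF t M0 M0).det) ?_ hF (by omega)
    have h1 := hankF_map (Int.castRingHom (ZMod q1)) t M U
    have h2 := hankF_map (Int.castRingHom (ZMod q1)) t M0 M0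
    change _ = (hankF t (redq N q1 M) (redq N q1 U)).det at h1
    change _ = (hankF t (redq N q1 M0) (redq N q1 M0)).det at h2
    rw [hM, hU, ← h2] at h1
    exact h1
  · refine htr.trans (natAbs_ge_of_cast_eq (q := q1) (redq_trace hM) (le_trans (by positivity) htr) ?_)
    have : (0:ℤ) ≤ trace M0 := le_trans (by positivity) htr
    omega

variable {Γ : Type*} [Group Γ] (ρ : Γ →* Matrix (Fin N) (Fin N) ℤ)

lemma rho_isUnit (γ : Γ) : IsUnit (ρ γ) := (Group.isUnit γ).map ρ

lemma cst_isUnit {M : Matrix (Fin N) (Fin N) ℤ} (h : IsUnit M) : IsUnit (cst N M) := h.map (cst N)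

lemma core_stage2 (h0 : Γ) {q : ℕ}
    (hspan : Submodule.span ℂ {M | ∃ γ, redq N q (ρ γ) = 1 ∧ M = cst N (ρ γ)} = ⊤) :
    ∃ B : Fin N × Fin N → Γ, (∀ i, redq N q (ρ (B i)) = redq N q (ρ h0)) ∧
      (tgram fun i => ρ (B i)).det ≠ 0 := by
  let b0 := Module.Basis.ofSpan hspan.ge
  let b1 := b0.reindex (b0.indexEquiv (Matrix.stdBasis ℂ (Fin N) (Fin N)))
  have hb1 : ∀ i, ∃ γ, redq N q (ρ γ) = 1 ∧ b1 i = cst N (ρ γ) := by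
    intro i
    have : b1 i ∈ Set.range b0 := by
      rw [Module.Basis.reindex_apply]; exact ⟨_, rfl⟩
    exact Module.Basis.ofSpan_subset hspan.ge this
  choose γ hγ hbγ using hb1
  refine ⟨fun i => h0 * γ i, fun i => by rw [map_mul, map_mul, hγ, mul_one], fun hz => ?_⟩
  have h1 := tgram_map (Int.castRingHom ℂ) (fun i => ρ (h0 * γ i))
  rw [hz, map_zero] at h1
  change 0 = (tgram fun i => cst N (ρ (h0 * γ i))).det at h1
  obtain ⟨u, hu⟩ := cst_isUnit (rho_isUnit ρ h0)
  let b2 := b1.map (LinearEquiv.ofBijective (LinearMap.mulLeft ℂ (cst N (ρ h0))) (by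
    rw [← hu]
    exact ⟨fun x y hxy => (Units.mul_right_inj u).1 hxy, fun y => ⟨((u⁻¹ : (Matrix (Fin N) (Fin N) ℂ)ˣ) : Matrix (Fin N) (Fin N) ℂ) * y, by simp⟩⟩))
  have hb2 : (fun i => cst N (ρ (h0 * γ i))) = b2 := by
    ext1 i
    simp only [b2, Module.Basis.map_apply, LinearEquiv.ofBijective_apply, LinearMap.mulLeft_apply]
    rw [hbγ, map_mul, map_mul]
  rw [hb2] at h1
  exact tgram_basis_ne_zero b2 h1.symm

lemma core_stage3 (h0 : Γ) {q1 : ℕ} (hq1 : 1 ≤ q1) 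
    (hspan : Submodule.span ℂ {M | ∃ γ, redq N q1 (ρ γ) = 1 ∧ M = cst N (ρ γ)} = ⊤) :
    ∃ L e : ℕ, 1 ≤ L ∧ 1 ≤ e ∧ (∀ w k, redq N q1 (ρ (w ^ (e * k))) = 1) ∧
    ∀ S : Finset Γ, Subgroup.closure (S : Set Γ) = ⊤ → ∃ b : Fin N × Fin N → Γ,
      (∀ i, InBall (S : Set Γ) L (b i)) ∧ (∀ i, redq N q1 (ρ (b i)) = redq N q1 (ρ h0)) ∧
      (tgram fun i => ρ (b i)).det ≠ 0 := by
  obtain ⟨B, hB, hD⟩ := core_stage2 ρ h0 hspan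
  set Dt := (tgram fun i => ρ (B i)).det with hDt
  set q := q1 * (Dt.natAbs + 1) with hq
  have hq0 : NeZero q := ⟨by positivity⟩
  have hdvd : q1 ∣ q := Dvd.intro _ rfl
  let φ : Γ →* (Matrix (Fin N) (Fin N) (ZMod q))ˣ :=
    MonoidHom.toHomUnits ((redq N q : _ →* Matrix (Fin N) (Fin N) (ZMod q)).comp ρ)
  have hφ : ∀ γ, ((φ γ : (Matrix (Fin N) (Fin N) (ZMod q))ˣ) : Matrix (Fin N) (Fin N) (ZMod q)) =
    redq N q (ρ γ) := fun γ => rfl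
  obtain ⟨L, hL, hcov⟩ := uniform_cover φ
  refine ⟨L, Nat.card (Matrix (Fin N) (Fin N) (ZMod q))ˣ, hL, Nat.card_pos, fun w k => ?_, fun S hS => ?_⟩
  · have h1 : φ (w ^ (Nat.card (Matrix (Fin N) (Fin N) (ZMod q))ˣ * k)) = 1 := by
      rw [map_pow, pow_mul, pow_card_eq_one', one_pow]
    have h2 := hφ (w ^ (Nat.card (Matrix (Fin N) (Fin N) (ZMod q))ˣ * k))
    rw [h1, Units.val_one] at h2
    have h3 := redq_mono hdvd (M := ρ (w ^ (Nat.card (Matrix (Fin N) (Fin N) (ZMod q))ˣ * k))) (M' := 1)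
      (by rw [← h2, map_one])
    rw [h3, map_one]
  · choose b hb hbB using fun i => hcov S hS (B i)
    have hbB' : ∀ i, redq N q (ρ (b i)) = redq N q (ρ (B i)) := fun i => by
      rw [← hφ, ← hφ, hbB]
    refine ⟨b, hb, fun i => (redq_mono hdvd (hbB' i)).trans (hB i), ?_⟩
    refine ne_zero_of_cast_eq (q := q) (y := Dt) ?_ hD (by rw [hq]; nlinarith)
    have h1 := tgram_map (Int.castRingHom (ZMod q)) (fun i => ρ (b i))
    have h2 := tgram_map (Int.castRingHom (ZMod q)) (fun i => ρ (B i))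
    change _ = (tgram fun i => redq N q (ρ (b i))).det at h1
    change _ = (tgram fun i => redq N q (ρ (B i))).det at h2
    simp only [hbB'] at h1
    rw [← h2] at h1
    exact h1

lemma ball_bound {T : ℝ} {e1 : ℕ} (hT : 2 ≤ T) (hN : 2 ≤ N)
    (b : Module.Basis (Fin N × Fin N) ℂ (Matrix (Fin N) (Fin N) ℂ)) {S : Set Γ}
    (hS : ∀ s, (s ∈ S ∨ s⁻¹ ∈ S) → ‖Algebra.leftMulMatrix b (cst N (ρ s))‖ ≤ T ^ e1) {n : ℕ} {x : Γ}
    (hx : InBall S n x) : ‖Algebra.leftMulMatrix b (cst N (ρ x))‖ ≤ T ^ (e1 * n) := by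
  have : Nonempty (Fin N × Fin N) := ⟨(⟨0, by omega⟩, ⟨0, by omega⟩)⟩
  have : NormOneClass (Matrix (Fin N × Fin N) (Fin N × Fin N) ℂ) := Matrix.linfty_opNormOneClass
  obtain ⟨w, hw, hw', rfl⟩ := hx
  refine mono_pow hT (a := e1 * w.length) ?_ (Nat.mul_le_mul_left _ hw)
  clear hw
  induction w with
  | nil => simp
  | cons s w ih =>
    rw [List.prod_cons, map_mul, map_mul, map_mul, List.length_cons, Nat.mul_succ, add_comm]
    refine (norm_mul_le _ _).trans ?_
    exact mul_le_pow hT (hS s (hw' s List.mem_cons_self))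
      (ih fun z hz => hw' z (List.mem_cons_of_mem _ hz)) (norm_nonneg _)

lemma trace_cst (M : Matrix (Fin N) (Fin N) ℤ) : trace (cst N M) = ((trace M : ℤ) : ℂ) := by
  rw [cst, RingHom.mapMatrix_apply]; simp [trace]

lemma norm_trace_cst (M : Matrix (Fin N) (Fin N) ℤ) : ‖trace (cst N M)‖ = ((|trace M| : ℤ) : ℝ) := by
  rw [trace_cst, Complex.norm_intCast]; push_cast; rfl

theorem core_theorem (hN : 2 ≤ N) (h0 : Γ) (hD0 : Nonempty (DiagData (cst N (ρ h0))))
    (htr : (N : ℤ) ^ 2 ≤ trace (ρ h0))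
    (hspan : ∀ q : ℕ, 1 ≤ q →
      Submodule.span ℂ {M | ∃ γ, redq N q (ρ γ) = 1 ∧ M = cst N (ρ γ)} = ⊤) :
    ∃ l, 1 ≤ l ∧ ∀ S : Finset Γ, Subgroup.closure (S : Set Γ) = ⊤ →
      ∃ a b, InBall (S : Set Γ) l a ∧ InBall (S : Set Γ) l b ∧ FreePair a b := by
  obtain ⟨D0⟩ := hD0
  obtain ⟨t, q1, hq1, hgood⟩ := core_stage1 (ρ h0) (rho_isUnit ρ h0) D0 htr
  obtain ⟨L, e, hL, he, hpow, hb⟩ := core_stage3 ρ h0 hq1 (hspan q1 hq1)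
  set e1 := letExp N with he1
  set m := 2 * (e * (N * N + (reprExp N + 2 + e1 * L) + 1)) with hm
  set C0 := e1 * (L + m * (3 * L)) with hC0
  set n := N * AnaData.mm N C0 t with hn
  refine ⟨L + n * (L + m * (3 * L)), by omega, fun S hS => ?_⟩
  obtain ⟨b, hbL, hbq, hbg⟩ := hb S hS
  obtain ⟨w, hwL, hwmax⟩ : ∃ w, InBall (S : Set Γ) (3 * L) w ∧
      ∀ x, InBall (S : Set Γ) (3 * L) x → |trace (ρ x)| ≤ |trace (ρ w)| := by
    obtain ⟨w, hw, hw'⟩ := Set.exists_max_image _ (fun x => |trace (ρ x)|)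
      (finite_inBall S.finite_toSet (3 * L)) ⟨1, InBall.one _⟩
    exact ⟨w, hw, hw'⟩
  have hgdet : (tgram fun i => cst N (ρ (b i))).det = (((tgram fun i => ρ (b i)).det : ℤ) : ℂ) :=
    (tgram_map (Int.castRingHom ℂ) (fun i => ρ (b i))).symm
  obtain ⟨bb, hbb⟩ := exists_basis_of_tgram (fun i => cst N (ρ (b i))) (by
    rw [hgdet]; exact_mod_cast hbg)
  have hbb' : (bb : Fin N × Fin N → _) = fun i => cst N (ρ (b i)) := funext hbb
  have hdet1 : 1 ≤ ‖(tgram bb).det‖ := by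
    rw [hbb', hgdet]; exact one_le_norm_intCast hbg
  set T : ℝ := ‖trace (cst N (ρ w))‖ with hT
  have hmax : ∀ x, InBall (S : Set Γ) (3 * L) x → ‖trace (cst N (ρ x))‖ ≤ T := by
    intro x hx
    rw [hT, norm_trace_cst, norm_trace_cst]
    exact_mod_cast hwmax x hx
  have i0 : Fin N × Fin N := (⟨0, by omega⟩, ⟨0, by omega⟩)
  have hTN : (N : ℝ) ^ 2 ≤ T := by
    have h1 := (hgood _ _ (hbq i0) (hbq i0)).2.2
    refine le_trans ?_ (hmax (b i0) ((hbL i0).mono (by omega)))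
    rw [norm_trace_cst]
    exact_mod_cast h1
  have hN2 : (2:ℝ) ≤ N := by exact_mod_cast hN
  have hT2 : 2 ≤ T := by nlinarith
  have hG : ∀ i j, ‖trace (bb i * bb j)‖ ≤ T := by
    intro i j
    rw [hbb, hbb, ← map_mul, ← map_mul]
    exact hmax _ (((hbL i).mul (hbL j)).mono (by omega))
  have hlet : ∀ s, (s ∈ (S : Set Γ) ∨ s⁻¹ ∈ (S : Set Γ)) →
      ‖Algebra.leftMulMatrix bb (cst N (ρ s))‖ ≤ T ^ e1 := by
    intro s hs
    have h1 : InBall (S : Set Γ) 1 s := ⟨[s], by simp, by simpa using hs, by simp⟩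
    refine letter_bound hT2 bb hdet1 hG _ fun k j => ?_
    rw [hbb, hbb, ← map_mul, ← map_mul, ← map_mul, ← map_mul]
    exact hmax _ (((hbL k).mul (h1.mul (hbL j))).mono (by omega))
  have hball := fun {n : ℕ} {x : Γ} => ball_bound ρ hT2 hN bb hlet (n := n) (x := x)
  have hbbb : ∀ i, ‖Algebra.leftMulMatrix bb (bb i)‖ ≤ T ^ (e1 * L) := by
    intro i; rw [hbb]; exact hball (hbL i)
  obtain ⟨k, hk⟩ := exists_big_trace hN hTN bb hdet1 hG hbbb (cst N (ρ w)) le_rfl he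
  set hh := b k * w ^ m with hhh
  have hhL : InBall (S : Set Γ) (L + m * (3 * L)) hh := (hbL k).mul (hwL.pow m)
  have hhc : cst N (ρ hh) = bb k * cst N (ρ w) ^ m := by
    rw [hhh, map_mul, map_mul, map_pow, map_pow, hbb]
  have hhq : redq N q1 (ρ hh) = redq N q1 (ρ h0) := by
    have h1 := hpow w (2 * (N * N + (reprExp N + 2 + e1 * L) + 1))
    rw [show e * (2 * (N * N + (reprExp N + 2 + e1 * L) + 1)) = m by rw [hm]; ring] at h1
    rw [hhh, map_mul, map_mul, h1, mul_one, hbq]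
  have hLC : e1 * L ≤ C0 := Nat.mul_le_mul_left _ (by omega)
  have hhT : (hankT (cst N (ρ hh))).det = (((hankT (ρ hh)).det : ℤ) : ℂ) :=
    (hankT_map (Int.castRingHom ℂ) (ρ hh)).symm
  have hhF : ∀ i, (hankF t (cst N (ρ hh)) (cst N (ρ (b i)))).det =
      (((hankF t (ρ hh) (ρ (b i))).det : ℤ) : ℂ) := fun i =>
    (hankF_map (Int.castRingHom ℂ) t (ρ hh) (ρ (b i))).symm
  have hA : AnaData N C0 t T bb (cst N (ρ hh)) := by
    refine ⟨hN, hT2, hball hhL, fun i => mono_pow hT2 (hbbb i) hLC, fun i => ?_,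
      norm_det_cst (rho_isUnit ρ _), ?_, ?_, fun i => ?_, fun i => ?_⟩
    · refine mono_pow hT2 (repr_bound hT2 bb hdet1 hG (x := 1) 1 (fun k => ?_) i) ?_
      · rw [pow_one, mul_one, hbb]; exact hmax _ ((hbL k).mono (by omega))
      · have : e1 ≤ e1 * L := Nat.le_mul_of_pos_right _ (by omega)
        have : reprExp N + 1 ≤ e1 := by rw [he1, letExp]; omega
        omega
    · rw [hhc]; exact hk
    · rw [hhT]; exact one_le_norm_intCast (hgood _ _ hhq hhq).1
    · rw [hbb, hhF]; exact one_le_norm_intCast (hgood _ _ hhq (hbq i)).2.1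
    · rw [hbb]; exact cst_isUnit (rho_isUnit ρ _)
  obtain ⟨D⟩ := diag_of_hankel (cst N (ρ hh)) (by
    rw [hhT]; exact_mod_cast (hgood _ _ hhq hhq).1)
  obtain ⟨i, hi⟩ := hA.free D
  refine ⟨hh ^ n, b i * hh ^ n, (hhL.pow n).mono (by omega), (hbL i).mul (hhL.pow n), ?_⟩
  intro u u' hlen hprod
  refine hi u u' hlen ?_
  have key : ∀ u : List Bool, (u.map fun c => if c then bb i * cst N (ρ hh) ^ n else cst N (ρ hh) ^ n).prod =
      cst N (ρ (u.map fun c => if c then b i * hh ^ n else hh ^ n).prod) := by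
    intro u
    rw [map_list_prod, map_list_prod, List.map_map, List.map_map]
    congr 1
    refine List.map_congr_left fun c _ => ?_
    cases c <;> simp [hbb]
  rw [key, key, hprod]

end Core

open Matrix Filter

section SpBasics
variable {g : ℕ}

/-- the partner index -/
def sg (i : Fin (2 * g)) : Fin (2 * g) :=
  ⟨if (i : ℕ) % 2 = 0 then i + 1 else i - 1, by have := i.2; split_ifs <;> omega⟩

/-- the sign of an index -/
def ep (i : Fin (2 * g)) : ℤ := if (i : ℕ) % 2 = 0 then 1 else -1

lemma sg_val (i : Fin (2 * g)) : (sg i : ℕ) = if (i : ℕ) % 2 = 0 then (i : ℕ) + 1 else i - 1 := rfl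

lemma sg_sg (i : Fin (2 * g)) : sg (sg i) = i := by
  apply Fin.ext
  rw [sg_val, sg_val]
  split_ifs <;> omega

lemma sg_ne (i : Fin (2 * g)) : sg i ≠ i := by
  intro h
  have := congrArg Fin.val h
  rw [sg_val] at this
  split_ifs at this <;> omega

lemma sg_inj {i j : Fin (2 * g)} (h : sg i = sg j) : i = j := by
  rw [← sg_sg i, h, sg_sg]

lemma ep_sg (i : Fin (2 * g)) : ep (sg i) = - ep i := by
  unfold ep
  rw [sg_val]
  by_cases h : (i : ℕ) % 2 = 0
  · simp only [h, if_true]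
    rw [if_neg (by omega)]
  · simp only [h, if_false]
    rw [if_pos (by omega), neg_neg]

lemma ep_mul (i : Fin (2 * g)) : ep i * ep i = 1 := by
  unfold ep; split_ifs <;> norm_num

lemma J_apply (i j : Fin (2 * g)) : stdSymplecticJ g i j = if j = sg i then ep i else 0 := by
  unfold stdSymplecticJ ep
  simp only [of_apply, Fin.ext_iff, sg_val]
  split_ifs <;> first | rfl | omega

lemma J_mulVec {R : Type*} [CommRing R] (f : ℤ →+* R) (v : Fin (2 * g) → R) (i : Fin (2 * g)) :
    (f.mapMatrix (stdSymplecticJ g) *ᵥ v) i = f (ep i) * v (sg i) := by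
  simp only [mulVec, dotProduct, RingHom.mapMatrix_apply, map_apply, J_apply]
  rw [Finset.sum_eq_single (sg i)]
  · simp
  · intro j _ hj; simp [hj]
  · simp

lemma vecMul_J (x : Fin (2 * g) → ℤ) (j : Fin (2 * g)) :
    (x ᵥ* stdSymplecticJ g) j = - ep j * x (sg j) := by
  simp only [vecMul, dotProduct, J_apply]
  rw [Finset.sum_eq_single (sg j)]
  · rw [sg_sg, if_pos rfl, ep_sg, mul_comm]
  · intro i _ hi
    rw [if_neg, mul_zero]
    rintro rfl
    exact hi (sg_sg i).symm
  · simp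

lemma stdJ_transpose : (stdSymplecticJ g)ᵀ = - stdSymplecticJ g := by
  ext i j
  simp only [transpose_apply, neg_apply, J_apply]
  by_cases h : i = sg j
  · subst h; simp [sg_sg, ep_sg]
  · rw [if_neg h, if_neg, neg_zero]
    rintro rfl; exact h (sg_sg i).symm

/-- symmetric matrices `B` with `B J B = 0` -/
structure SymIso (B : Matrix (Fin (2 * g)) (Fin (2 * g)) ℤ) : Prop where
  symm : Bᵀ = B
  iso : B * stdSymplecticJ g * B = 0

lemma tv_mul {B : Matrix (Fin (2 * g)) (Fin (2 * g)) ℤ} (hB : SymIso B) (c d : ℤ) :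
    (1 + c • (stdSymplecticJ g * B)) * (1 + d • (stdSymplecticJ g * B)) =
      1 + (c + d) • (stdSymplecticJ g * B) := by
  have h : stdSymplecticJ g * B * (stdSymplecticJ g * B) = 0 := by
    rw [mul_assoc, ← mul_assoc B, hB.iso, mul_zero]
  rw [add_mul, mul_add, mul_add, smul_mul_smul_comm, h, smul_zero, add_smul]
  simp only [one_mul, mul_one]
  abel

/-- the transvection `1 + c J B`. -/
def tv {B : Matrix (Fin (2 * g)) (Fin (2 * g)) ℤ} (hB : SymIso B) : Multiplicative ℤ →* Sp g where
  toFun c := ⟨⟨1 + c.toAdd • (stdSymplecticJ g * B), 1 + (-c.toAdd) • (stdSymplecticJ g * B),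
      by rw [tv_mul hB]; simp, by rw [tv_mul hB]; simp⟩, by
    change (1 + c.toAdd • (stdSymplecticJ g * B)) * stdSymplecticJ g *
      (1 + c.toAdd • (stdSymplecticJ g * B))ᵀ = stdSymplecticJ g
    have h : stdSymplecticJ g * B * stdSymplecticJ g * (B * stdSymplecticJ g) = 0 := by
      rw [← mul_assoc, mul_assoc (stdSymplecticJ g), mul_assoc (stdSymplecticJ g), hB.iso, mul_zero,
        zero_mul]
    rw [transpose_add, transpose_one, transpose_smul, transpose_mul, hB.symm, stdJ_transpose, mul_neg,
      smul_neg, add_mul, one_mul, smul_mul_assoc, mul_add, mul_one, mul_neg, mul_smul_comm, add_mul,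
      smul_mul_assoc, h, mul_assoc]
    simp⟩
  map_one' := by ext; simp
  map_mul' c d := by
    apply Subtype.ext; apply Units.ext
    exact (tv_mul hB c.toAdd d.toAdd).symm

/-- the matrix of an element of `Sp` -/
def mat : Sp g →* Matrix (Fin (2 * g)) (Fin (2 * g)) ℤ := (Units.coeHom _).comp (Sp g).subtype

lemma mat_tv {B : Matrix (Fin (2 * g)) (Fin (2 * g)) ℤ} (hB : SymIso B) (c : ℤ) :
    mat (tv hB (Multiplicative.ofAdd c)) = 1 + c • (stdSymplecticJ g * B) := rfl

lemma mat_inj : Function.Injective (mat (g := g)) := fun _ _ h => Subtype.ext (Units.ext h)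

lemma mat_sp (M : Sp g) : mat M * stdSymplecticJ g * (mat M)ᵀ = stdSymplecticJ g := M.2

lemma single_J_single (a b c d : Fin (2 * g)) (h : c ≠ sg b) :
    single a b (1 : ℤ) * stdSymplecticJ g * single c d 1 = 0 := by
  rw [single_mul_mul_single, J_apply, if_neg h]; simp

lemma symIso_diag (α : Fin (2 * g)) : SymIso (single α α (1 : ℤ)) :=
  ⟨by simp, single_J_single _ _ _ _ (sg_ne _).symm⟩

lemma symIso_off (α β : Fin (2 * g)) (h : β ≠ sg α) : SymIso (single α β (1 : ℤ) + single β α 1) := by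
  have h' : α ≠ sg β := by rintro rfl; exact h (sg_sg β).symm
  refine ⟨by simp [add_comm], ?_⟩
  rw [add_mul, add_mul, mul_add, mul_add, single_J_single _ _ _ _ h', single_J_single _ _ _ _ h,
    single_J_single _ _ _ _ (sg_ne _).symm, single_J_single _ _ _ _ (sg_ne _).symm]
  simp

/-- the finite generating set -/
noncomputable def genF : (Fin (2 * g) × Fin (2 * g)) ⊕ Fin (2 * g) → Sp g
  | Sum.inl (α, β) => open Classical in
      if h : β ≠ sg α then tv (symIso_off α β h) (Multiplicative.ofAdd 1) else 1
  | Sum.inr α => tv (symIso_diag α) (Multiplicative.ofAdd 1)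

/-- the subgroup generated -/
noncomputable def HH (g : ℕ) : Subgroup (Sp g) := Subgroup.closure (Set.range genF)

lemma tv_mem_of {H : Subgroup (Sp g)} {B : Matrix (Fin (2 * g)) (Fin (2 * g)) ℤ} (hB : SymIso B)
    (h1 : tv hB (Multiplicative.ofAdd 1) ∈ H) (c : ℤ) : tv hB (Multiplicative.ofAdd c) ∈ H := by
  have : Multiplicative.ofAdd c = Multiplicative.ofAdd (1:ℤ) ^ c := by
    rw [← ofAdd_zsmul]; simp
  rw [this, map_zpow]
  exact H.zpow_mem h1 c

lemma tv_diag_mem (α : Fin (2 * g)) (c : ℤ) :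
    tv (symIso_diag α) (Multiplicative.ofAdd c) ∈ HH g :=
  tv_mem_of (H := HH g) _ (Subgroup.subset_closure (Set.mem_range.2 ⟨Sum.inr α, rfl⟩)) c

lemma tv_off_mem (α β : Fin (2 * g)) (h : β ≠ sg α) (c : ℤ) :
    tv (symIso_off α β h) (Multiplicative.ofAdd c) ∈ HH g :=
  tv_mem_of (H := HH g) _ (Subgroup.subset_closure (Set.mem_range.2 ⟨Sum.inl (α, β), by simp [genF, h]⟩)) c

end SpBasics

open Matrix Filter

section SpGen
variable {g : ℕ}

/-- `y` is reached from the row vector `x` by an element of `HH g` fixing the basis rows in `A` -/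
def Mov (A : Set (Fin (2 * g))) (x y : Fin (2 * g) → ℤ) : Prop :=
  ∃ h ∈ HH g, (∀ i ∈ A, mat h i = Pi.single i 1) ∧ x ᵥ* mat h = y

lemma Mov.trans {A : Set (Fin (2 * g))} {x y z : Fin (2 * g) → ℤ} (h1 : Mov A x y) (h2 : Mov A y z) :
    Mov A x z := by
  obtain ⟨a, ha, ha', rfl⟩ := h1
  obtain ⟨b, hb, hb', rfl⟩ := h2
  refine ⟨a * b, mul_mem ha hb, fun i hi => ?_, by rw [map_mul, vecMul_vecMul]⟩
  rw [map_mul, mul_apply_eq_vecMul, ha' i hi, single_one_vecMul]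
  exact hb' i hi

lemma Mov.refl (A : Set (Fin (2 * g))) (x : Fin (2 * g) → ℤ) : Mov A x x :=
  ⟨1, one_mem _, fun i _ => by ext j; simp [Matrix.one_apply, Pi.single_apply, eq_comm], by simp⟩

lemma row_eq (M : Matrix (Fin (2 * g)) (Fin (2 * g)) ℤ) (i : Fin (2 * g)) :
    M i = Pi.single i 1 ᵥ* M := (single_one_vecMul i M).symm

lemma tv_vec {B : Matrix (Fin (2 * g)) (Fin (2 * g)) ℤ} (hB : SymIso B) (c : ℤ) (x : Fin (2 * g) → ℤ) :
    x ᵥ* mat (tv hB (Multiplicative.ofAdd c)) = x + c • ((x ᵥ* stdSymplecticJ g) ᵥ* B) := by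
  rw [mat_tv, vecMul_add, vecMul_one, vecMul_smul, vecMul_vecMul]

lemma vecMul_single_one (v : Fin (2 * g) → ℤ) (α β : Fin (2 * g)) :
    v ᵥ* single α β (1 : ℤ) = Pi.single β (v α) := by
  ext j
  simp only [vecMul, dotProduct, single_apply, Pi.single_apply]
  rw [Finset.sum_eq_single α]
  · by_cases h : β = j
    · simp [h]
    · simp [h, Ne.symm h]
  · intro i _ hi; simp [Ne.symm hi]
  · simp

lemma Mov.step1 (A : Set (Fin (2 * g))) (x : Fin (2 * g) → ℤ) (α : Fin (2 * g)) (hα : sg α ∉ A) (c : ℤ) :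
    Mov A x (x + Pi.single α (c * x (sg α))) := by
  have key : ∀ x, x ᵥ* mat (tv (symIso_diag α) (Multiplicative.ofAdd (-ep α * c))) =
      x + Pi.single α (c * x (sg α)) := by
    intro x
    rw [tv_vec, vecMul_single_one, vecMul_J, ← Pi.single_smul, smul_eq_mul]
    congr 2
    linear_combination (c * x (sg α)) * ep_mul α
  refine ⟨_, tv_diag_mem α (-ep α * c), fun i hi => ?_, key x⟩
  refine (row_eq _ i).trans ?_
  rw [key]
  have : i ≠ sg α := by rintro rfl; exact hα hi
  simp [Pi.single_apply, Ne.symm this]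

lemma Mov.step2 (A : Set (Fin (2 * g))) (x : Fin (2 * g) → ℤ) (α β : Fin (2 * g)) (hαβ : α ≠ β)
    (hα : sg α ∉ A) (hβ : β ∉ A) (c : ℤ) :
    ∃ c', Mov A x (x + (Pi.single α (c * x β) + Pi.single (sg β) (c' * x (sg α)))) := by
  have hne : sg β ≠ sg α := fun h => hαβ (sg_inj h).symm
  have key : ∀ x, x ᵥ* mat (tv (symIso_off α (sg β) hne) (Multiplicative.ofAdd (ep β * c))) =
      x + (Pi.single α (c * x β) + Pi.single (sg β) ((-ep α * ep β * c) * x (sg α))) := by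
    intro x
    rw [tv_vec, vecMul_add, vecMul_single_one, vecMul_single_one, vecMul_J, vecMul_J, smul_add,
      ← Pi.single_smul, ← Pi.single_smul, smul_eq_mul, smul_eq_mul, sg_sg, ep_sg, add_comm (Pi.single _ _)]
    congr 3
    · linear_combination (c * x β) * ep_mul β
    · ring
  refine ⟨_, _, tv_off_mem α (sg β) hne (ep β * c), fun i hi => ?_, key x⟩
  refine (row_eq _ i).trans ?_
  rw [key]
  have h1 : i ≠ sg α := by rintro rfl; exact hα hi
  have h2 : i ≠ β := by rintro rfl; exact hβ hi
  simp [Pi.single_apply, Ne.symm h1, Ne.symm h2]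

lemma exists_sign_lt {a b : ℤ} (hb : b ≠ 0) (hab : |b| ≤ |a|) : ∃ c : ℤ, |a + c * b| < |a| := by
  rcases le_total 0 a with ha | ha <;> rcases le_total 0 b with hb' | hb'
  · refine ⟨-1, ?_⟩
    rw [abs_of_nonneg ha, abs_of_nonneg hb'] at *
    rw [abs_lt]; constructor <;> omega
  · refine ⟨1, ?_⟩
    rw [abs_of_nonneg ha, abs_of_nonpos hb'] at *
    rw [abs_lt]; constructor <;> omega
  · refine ⟨1, ?_⟩
    rw [abs_of_nonpos ha, abs_of_nonneg hb'] at *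
    rw [abs_lt]; constructor <;> omega
  · refine ⟨-1, ?_⟩
    rw [abs_of_nonpos ha, abs_of_nonpos hb'] at *
    rw [abs_lt]; constructor <;> omega

/-- the `ℓ¹` size -/
def ell (x : Fin (2 * g) → ℤ) : ℕ := ∑ i, (x i).natAbs

lemma ell_lt {x : Fin (2 * g) → ℤ} {α : Fin (2 * g)} {d : ℤ} (h : |x α + d| < |x α|) :
    ell (x + Pi.single α d) < ell x := by
  refine Finset.sum_lt_sum (fun i _ => ?_) ⟨α, Finset.mem_univ _, ?_⟩
  · by_cases hi : i = α
    · subst hi; simp; exact Int.natAbs_le_iff_sq_le.2 (sq_le_sq.2 h.le)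
    · simp [hi]
  · simp; exact Int.natAbs_lt_iff_sq_lt.2 (sq_lt_sq.2 h)

lemma sg_lt_iff {n : ℕ} (hn : n % 2 = 0) (i : Fin (2 * g)) : (sg i : ℕ) < n ↔ (i : ℕ) < n := by
  rw [sg_val]; split_ifs <;> omega

/-- from a signed basis vector to the basis vector `p` -/
lemma mov_unit (n : ℕ) (hn : n % 2 = 0) (p : Fin (2 * g)) (hp : (p : ℕ) = n) (α : Fin (2 * g))
    (hα : n ≤ α) (a : ℤ) (ha : a * a = 1) :
    Mov {i | (i : ℕ) < n} (Pi.single α a) (Pi.single p 1) := by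
  have hA : ∀ i : Fin (2 * g), n ≤ i → i ∉ {i : Fin (2 * g) | (i : ℕ) < n} := fun i hi h => by
    have : (i : ℕ) < n := h
    omega
  have hsA : ∀ i : Fin (2 * g), n ≤ i → sg i ∉ {i : Fin (2 * g) | (i : ℕ) < n} := fun i hi h => by
    have : (sg i : ℕ) < n := h
    rw [sg_lt_iff hn] at this
    omega
  have hp' : n ≤ (p : ℕ) := hp.ge
  have hsp : n ≤ (sg p : ℕ) := by
    have := sg_lt_iff hn p; omega
  -- the case `α = sg p`
  have case1 : ∀ a : ℤ, a * a = 1 →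
      Mov {i : Fin (2 * g) | (i : ℕ) < n} (Pi.single (sg p) a) (Pi.single p 1) := by
    intro a ha
    refine (Mov.step1 _ _ p (hsA p hp') a).trans ?_
    have h2 := Mov.step1 {i : Fin (2 * g) | (i : ℕ) < n}
      (Pi.single (sg p) a + Pi.single p (a * (Pi.single (sg p) a : Fin (2 * g) → ℤ) (sg p)))
      (sg p) (by rw [sg_sg]; exact hA p hp') (-a)
    convert h2 using 1
    ext j
    by_cases h1 : j = p
    · subst h1; simp [sg_sg, ha, (sg_ne j).symm]
    · by_cases h3 : j = sg p
      · subst h3; simp [sg_sg, ha, sg_ne p, (sg_ne p).symm]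
      · simp [h1, h3]
  by_cases h1 : α = sg p
  · subst h1; exact case1 a ha
  by_cases h2 : α = p
  · subst h2
    -- rotate: first to `(a, 1)`, then to `(0, 1)`
    have h3 := Mov.step1 {i : Fin (2 * g) | (i : ℕ) < n} (Pi.single α a) (sg α)
      (by rw [sg_sg]; exact hA α hp') a
    refine h3.trans (Mov.trans ?_ (case1 1 rfl))
    have h4 := Mov.step1 {i : Fin (2 * g) | (i : ℕ) < n}
      (Pi.single α a + Pi.single (sg α) (a * (Pi.single α a : Fin (2 * g) → ℤ) (sg (sg α))))
      α (hsA α hp') (-a)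
    convert h4 using 1
    ext j
    by_cases h1 : j = α
    · subst h1; simp [sg_sg, ha, (sg_ne j).symm, sg_ne j]
    · by_cases h3 : j = sg α
      · subst h3; simp [sg_sg, ha, sg_ne α]
      · simp [h1, h3]
  · have hsα : sg α ≠ p := fun h => h1 (by rw [← h, sg_sg])
    have hsα' : sg α ≠ sg p := fun h => h2 (sg_inj h)
    obtain ⟨c', h3⟩ := Mov.step2 {i : Fin (2 * g) | (i : ℕ) < n} (Pi.single α a) p α (Ne.symm h2)
      (hsA p hp') (hA α hα) a
    refine h3.trans ?_
    obtain ⟨c'', h4⟩ := Mov.step2 {i : Fin (2 * g) | (i : ℕ) < n} 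
      (Pi.single α a + (Pi.single p (a * (Pi.single α a : Fin (2 * g) → ℤ) α) + Pi.single (sg α)
        (c' * (Pi.single α a : Fin (2 * g) → ℤ) (sg p)))) α p h2 (hsA α hα) (hA p hp') (-a)
    convert h4 using 1
    ext j
    by_cases h5 : j = p
    · subst h5
      simp [h2, h1, ha, Ne.symm h1, Ne.symm h2, sg_ne, hsα, Ne.symm hsα, Ne.symm hsα', (sg_ne j).symm]
    · by_cases h6 : j = α
      · subst h6; simp [h2, h1, ha, Ne.symm h1, Ne.symm h2, sg_ne, (sg_ne j).symm]
      · simp [h5, h6, ha, h1, h2, Ne.symm h1, Ne.symm h2, sg_ne, hsα, Ne.symm hsα]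

lemma mov_unimod {A : Set (Fin (2 * g))} {x y : Fin (2 * g) → ℤ} (h : Mov A x y)
    (hx : ∃ z, x ⬝ᵥ z = 1) : ∃ z, y ⬝ᵥ z = 1 := by
  obtain ⟨a, -, -, rfl⟩ := h
  obtain ⟨z, hz⟩ := hx
  refine ⟨mat a⁻¹ *ᵥ z, ?_⟩
  rw [← dotProduct_mulVec, mulVec_mulVec, ← map_mul, mul_inv_cancel, map_one, one_mulVec, hz]

lemma claimB (n : ℕ) (hn : n % 2 = 0) (p : Fin (2 * g)) (hp : (p : ℕ) = n) (m : ℕ) :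
    ∀ x : Fin (2 * g) → ℤ, ell x = m → (∀ i : Fin (2 * g), (i : ℕ) < n → x i = 0) → (∃ z, x ⬝ᵥ z = 1) →
    Mov {i | (i : ℕ) < n} x (Pi.single p 1) := by
  induction m using Nat.strong_induction_on with
  | _ m ih =>
  intro x hxm hx hz
  subst hxm
  have hA : ∀ i : Fin (2 * g), n ≤ i → i ∉ {i : Fin (2 * g) | (i : ℕ) < n} := fun i hi h => by
    have : (i : ℕ) < n := h
    omega
  have hsA : ∀ i : Fin (2 * g), n ≤ i → sg i ∉ {i : Fin (2 * g) | (i : ℕ) < n} := fun i hi h => by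
    have : (sg i : ℕ) < n := h
    rw [sg_lt_iff hn] at this
    omega
  have hge : ∀ i, x i ≠ 0 → n ≤ (i : ℕ) := fun i hi => by
    by_contra h; exact hi (hx i (by omega))
  -- generic descent
  have desc : ∀ (α : Fin (2 * g)) (d : ℤ), n ≤ (α : ℕ) → |x α + d| < |x α| →
      Mov {i : Fin (2 * g) | (i : ℕ) < n} x (x + Pi.single α d) →
      Mov {i : Fin (2 * g) | (i : ℕ) < n} x (Pi.single p 1) := by
    intro α d hα hlt hmov
    refine hmov.trans (ih _ (ell_lt hlt) _ rfl (fun i hi => ?_) (mov_unimod hmov hz))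
    have : i ≠ α := by rintro rfl; omega
    simp [this, hx i hi]
  by_cases h1 : ∃ α, x (sg α) ≠ 0 ∧ |x (sg α)| ≤ |x α|
  · obtain ⟨α, h1, h2⟩ := h1
    obtain ⟨c, hc⟩ := exists_sign_lt h1 h2
    have hα : n ≤ (α : ℕ) := by
      have := hge _ h1; have := sg_lt_iff hn α; omega
    exact desc α _ hα hc (Mov.step1 _ x α (hsA α hα) c)
  push Not at h1
  have h1' : ∀ α, x α ≠ 0 → x (sg α) = 0 := by
    intro α hα
    by_contra h2
    have h3 := h1 α h2
    have h4 := h1 (sg α) (by rwa [sg_sg])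
    rw [sg_sg] at h4
    omega
  by_cases h2 : ∃ α β, α ≠ β ∧ x α ≠ 0 ∧ x β ≠ 0 ∧ |x β| ≤ |x α|
  · obtain ⟨α, β, hαβ, hα, hβ, hle⟩ := h2
    obtain ⟨c, hc⟩ := exists_sign_lt hβ hle
    obtain ⟨c', hmov⟩ := Mov.step2 {i : Fin (2 * g) | (i : ℕ) < n} x α β hαβ (hsA α (hge α hα))
      (hA β (hge β hβ)) c
    rw [h1' α hα, mul_zero, Pi.single_zero, add_zero] at hmov
    exact desc α _ (hge α hα) hc hmov
  push Not at h2
  have h3 : ∃ α, x α ≠ 0 := by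
    by_contra h0
    push Not at h0
    obtain ⟨z, hz⟩ := hz
    have : x = 0 := funext h0
    simp [this] at hz
  obtain ⟨α, hα⟩ := h3
  have hxs : x = Pi.single α (x α) := by
    ext j
    by_cases hj : j = α
    · subst hj; simp
    · by_contra h0
      simp only [hj, Pi.single_apply, if_false] at h0
      have h4 := h2 j α hj h0 hα
      have h5 := h2 α j (Ne.symm hj) hα h0
      omega
  have ha : x α * x α = 1 := by
    obtain ⟨z, hz⟩ := hz
    rw [hxs, single_dotProduct] at hz
    have := Int.isUnit_iff.1 (IsUnit.of_mul_eq_one _ hz)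
    rcases this with h | h <;> rw [h] <;> rfl
  rw [hxs]
  exact mov_unit n hn p hp α (hge α hα) _ ha

lemma claimC (n : ℕ) (hn : n % 2 = 0) (p : Fin (2 * g)) (hp : (p : ℕ) = n) (m : ℕ) :
    ∀ x : Fin (2 * g) → ℤ, (∀ i : Fin (2 * g), (i : ℕ) < n → x i = 0) → x (sg p) = 1 →
    (∀ i : Fin (2 * g), m + n + 2 ≤ i → x i = 0) →
    Mov {i | (i : ℕ) < n + 1} x (Pi.single (sg p) 1) := by
  have hsp : (sg p : ℕ) = n + 1 := by rw [sg_val]; simp [hp, hn]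
  induction m with
  | zero =>
    intro x hx hx1 hx2
    have h1 := Mov.step1 {i : Fin (2 * g) | (i : ℕ) < n + 1} x p
      (fun h => by have : (sg p : ℕ) < n + 1 := h; omega) (- x p)
    convert h1 using 1
    ext j
    by_cases h2 : j = p
    · subst h2; simp [hx1, (sg_ne j).symm]
    · by_cases h3 : j = sg p
      · subst h3; simp [hx1, sg_ne]
      · have : x j = 0 := by
          rcases lt_or_ge (j : ℕ) n with h | h
          · exact hx j h
          · refine hx2 j ?_
            have h4 : (j : ℕ) ≠ n := fun h => h2 (Fin.ext (by omega))
            have h5 : (j : ℕ) ≠ n + 1 := fun h => h3 (Fin.ext (by omega))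
            omega
        simp [h2, h3, this]
  | succ m ih =>
    intro x hx hx1 hx2
    by_cases hm : m + n + 2 < 2 * g
    · let j : Fin (2 * g) := ⟨m + n + 2, hm⟩
      have hj : (j : ℕ) = m + n + 2 := rfl
      have hjsp : j ≠ sg p := fun h => by
        have := congrArg Fin.val h; omega
      have hsj := sg_lt_iff (n := n + 2) (by omega) j
      obtain ⟨c', h1⟩ := Mov.step2 {i : Fin (2 * g) | (i : ℕ) < n + 1} x j (sg p) hjsp
        (fun h => by have : (sg j : ℕ) < n + 1 := h; omega)
        (fun h => by have : (sg p : ℕ) < n + 1 := h; omega) (- x j)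
      rw [sg_sg] at h1
      refine h1.trans (ih _ (fun i hi => ?_) ?_ fun i hi => ?_)
      · have e1 : i ≠ j := by rintro rfl; omega
        have e2 : i ≠ p := by rintro rfl; omega
        simp [e1, e2, hx i hi]
      · simp [Ne.symm hjsp, sg_ne, hx1]
      · have e2 : i ≠ p := by rintro rfl; omega
        by_cases e1 : i = j
        · rw [e1] at e2 ⊢; simp [e2, hx1]
        · have : (i : ℕ) ≠ m + n + 2 := fun h => e1 (Fin.ext h)
          simp [e1, e2, hx2 i (by omega)]
    · exact ih x hx hx1 fun i hi => by have := i.2; omega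

lemma row_rel (M : Sp g) (i j : Fin (2 * g)) (hi : mat M i = Pi.single i 1) :
    mat M j (sg i) = ep i * stdSymplecticJ g i j := by
  have h := congrFun (congrFun (mat_sp M) i) j
  rw [mul_apply_eq_vecMul, mul_apply_eq_vecMul, hi, single_one_vecMul] at h
  rw [← h]
  change _ = ep i * ∑ k, stdSymplecticJ g i k * mat M j k
  simp only [J_apply]
  rw [Finset.sum_eq_single (sg i)]
  · rw [if_pos rfl, ← mul_assoc, ep_mul, one_mul]
  · intro k _ hk; simp [hk]
  · simp

lemma reduce (n : ℕ) : ∀ M : Sp g, (∀ i : Fin (2 * g), (i : ℕ) + n < 2 * g → mat M i = Pi.single i 1) →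
    M ∈ HH g := by
  induction n with
  | zero =>
    intro M hM
    have : M = 1 := mat_inj (by
      ext i j
      rw [hM i (by have := i.2; omega), map_one]
      simp [Matrix.one_apply, Pi.single_apply, eq_comm])
    rw [this]; exact one_mem _
  | succ n ih =>
    intro M hM
    by_cases hg : n + 1 ≤ 2 * g
    swap
    · exact ih M fun i hi => by omega
    have hfin : ∀ (r : Fin (2 * g)), (r : ℕ) + n + 1 = 2 * g →
        Mov {i | (i : ℕ) < (r : ℕ)} (mat M r) (Pi.single r 1) → M ∈ HH g := by
      rintro r hr ⟨h, hh, hfix, hmov⟩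
      have h1 : M * h ∈ HH g := ih _ fun i hi => by
        rw [map_mul, mul_apply_eq_vecMul]
        by_cases hir : i = r
        · rw [hir, hmov]
        · have : (i : ℕ) ≠ r := fun h => hir (Fin.ext h)
          have hlt : (i : ℕ) < r := by omega
          rw [hM i (by omega), single_one_vecMul]
          exact hfix i hlt
      exact ((HH g).mul_mem_cancel_right hh).1 h1
    rcases Nat.mod_two_eq_zero_or_one n with hn | hn
    · -- the row has odd index
      let p : Fin (2 * g) := ⟨2 * g - n - 2, by omega⟩
      have hp : (p : ℕ) = 2 * g - n - 2 := rfl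
      have hpm : (p : ℕ) % 2 = 0 := by omega
      have hsp : (sg p : ℕ) = p + 1 := by rw [sg_val, if_pos hpm]
      refine hfin (sg p) (by omega) ?_
      rw [hsp]
      refine claimC p hpm p rfl (2 * g) (mat M (sg p)) (fun i hi => ?_) ?_ fun i hi => by
        have := i.2; omega
      · have h1 := sg_lt_iff hpm i
        have h2 := row_rel M (sg i) (sg p) (hM _ (by omega))
        rw [sg_sg] at h2
        rw [h2, J_apply, if_neg, mul_zero]
        rw [sg_sg]; rintro h; rw [← h] at hi; omega
      · rw [row_rel M p (sg p) (hM _ (by omega)), J_apply, if_pos rfl, ep_mul]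
    · let p : Fin (2 * g) := ⟨2 * g - n - 1, by omega⟩
      have hp : (p : ℕ) = 2 * g - n - 1 := rfl
      have hpm : (p : ℕ) % 2 = 0 := by omega
      refine hfin p (by omega) ?_
      refine claimB p hpm p rfl _ (mat M p) rfl (fun i hi => ?_) ?_
      · have h1 := sg_lt_iff hpm i
        have h2 := row_rel M (sg i) p (hM _ (by omega))
        rw [sg_sg] at h2
        rw [h2, J_apply, if_neg, mul_zero]
        rw [sg_sg]; rintro h; rw [← h] at hi; omega
      · refine ⟨fun j => mat M⁻¹ j p, ?_⟩
        have : (mat M * mat M⁻¹) p p = 1 := by rw [← map_mul, mul_inv_cancel, map_one]; simp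
        rw [← this]; rfl

theorem sp_fg (g : ℕ) : Group.FG (Sp g) := by
  rw [Group.fg_iff]
  refine ⟨Set.range genF, ?_, Set.finite_range _⟩
  rw [eq_top_iff]
  intro M _
  exact reduce (2 * g) M fun i hi => by omega

end SpGen

open Matrix Filter

section SpSpan
variable {g : ℕ}

/-- complex span of the principal congruence subgroup -/
noncomputable def spanQ (g q : ℕ) : Submodule ℂ (Matrix (Fin (2 * g)) (Fin (2 * g)) ℂ) :=
  Submodule.span ℂ {M | ∃ γ : Sp g, redq (2 * g) q (mat γ) = 1 ∧ M = cst (2 * g) (mat γ)}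

lemma spanQ_mul {q : ℕ} {X Y : Matrix (Fin (2 * g)) (Fin (2 * g)) ℂ} (hX : X ∈ spanQ g q)
    (hY : Y ∈ spanQ g q) : X * Y ∈ spanQ g q := by
  have h := Submodule.mul_mem_mul hX hY
  rw [spanQ, Submodule.span_mul_span] at h
  refine Submodule.span_mono ?_ h
  rintro _ ⟨_, ⟨a, ha, rfl⟩, _, ⟨b, hb, rfl⟩, rfl⟩
  exact ⟨a * b, by rw [map_mul, map_mul, ha, hb, one_mul], by simp only [map_mul]⟩

lemma spanQ_one (q : ℕ) : (1 : Matrix (Fin (2 * g)) (Fin (2 * g)) ℂ) ∈ spanQ g q :=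
  Submodule.subset_span ⟨1, by simp, by simp⟩

lemma spanQ_tv {q : ℕ} (hq : 1 ≤ q) {B : Matrix (Fin (2 * g)) (Fin (2 * g)) ℤ} (hB : SymIso B) :
    cst (2 * g) (stdSymplecticJ g * B) ∈ spanQ g q := by
  have h1 : cst (2 * g) (mat (tv hB (Multiplicative.ofAdd (q : ℤ)))) ∈ spanQ g q := by
    refine Submodule.subset_span ⟨_, ?_, rfl⟩
    have := (redq_eq_iff q (mat (tv hB (Multiplicative.ofAdd (q : ℤ)))) 1).2 (fun i j => by
      rw [mat_tv, Matrix.add_apply, Matrix.smul_apply, smul_eq_mul]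
      exact ⟨- (stdSymplecticJ g * B) i j, by ring⟩)
    rw [this, map_one]
  rw [mat_tv, map_add, map_one, map_zsmul] at h1
  have h2 := (spanQ g q).sub_mem h1 (spanQ_one q)
  rw [add_sub_cancel_left] at h2
  have h3 := (spanQ g q).smul_mem ((q : ℂ)⁻¹) h2
  have hq0 : (q : ℂ) ≠ 0 := by exact_mod_cast (by omega : q ≠ 0)
  have h4 : (q : ℂ)⁻¹ • ((q : ℤ) • cst (2 * g) (stdSymplecticJ g * B)) =
      cst (2 * g) (stdSymplecticJ g * B) := by
    rw [← Int.cast_smul_eq_zsmul ℂ, smul_smul]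
    simp [hq0]
  rwa [h4] at h3

lemma J_mul_single (α β : Fin (2 * g)) :
    stdSymplecticJ g * single α β 1 = single (sg α) β (- ep α) := by
  ext i j
  rw [mul_apply, Finset.sum_eq_single α]
  · simp only [J_apply, single_apply]
    by_cases h : i = sg α
    · subst h; simp [sg_sg, ep_sg]
    · have h1 : ¬ α = sg i := fun h' => h (by rw [h', sg_sg])
      simp [h1, Ne.symm h]
  · intro k _ hk; simp [single_apply, Ne.symm hk]
  · simp

lemma cst_single (i j : Fin (2 * g)) (c : ℤ) : cst (2 * g) (single i j c) = single i j (c : ℂ) := by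
  rw [cst, RingHom.mapMatrix_apply, Matrix.map_single]; simp

lemma ep_cast_mul (i : Fin (2 * g)) : (ep i : ℂ) * ep i = 1 := by exact_mod_cast ep_mul i

lemma spanQ_single_of {q : ℕ} {i j : Fin (2 * g)} {c : ℂ} (hc : c ≠ 0) (h : single i j c ∈ spanQ g q) :
    single i j (1 : ℂ) ∈ spanQ g q := by
  have := (spanQ g q).smul_mem c⁻¹ h
  rwa [smul_single, smul_eq_mul, inv_mul_cancel₀ hc] at this

lemma ep_cast_ne (i : Fin (2 * g)) : -(ep i : ℂ) ≠ 0 := by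
  intro h
  have := ep_cast_mul i
  rw [neg_eq_zero.1 h] at this
  simp at this

lemma spanQ_a {q : ℕ} (hq : 1 ≤ q) (α : Fin (2 * g)) : single (sg α) α (1 : ℂ) ∈ spanQ g q := by
  have h1 := spanQ_tv hq (symIso_diag α)
  rw [J_mul_single, cst_single] at h1
  exact spanQ_single_of (by push_cast; exact ep_cast_ne α) h1

lemma spanQ_b {q : ℕ} (hq : 1 ≤ q) (α : Fin (2 * g)) : single α α (1 : ℂ) ∈ spanQ g q := by
  have h1 := spanQ_mul (spanQ_a hq (sg α)) (spanQ_a hq α)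
  rwa [single_mul_single_same, sg_sg, one_mul] at h1

lemma spanQ_c {q : ℕ} (hq : 1 ≤ q) (i j : Fin (2 * g)) : single i j (1 : ℂ) ∈ spanQ g q := by
  by_cases hij : i = j
  · subst hij; exact spanQ_b hq i
  obtain ⟨α, rfl⟩ : ∃ α, i = sg α := ⟨sg i, (sg_sg i).symm⟩
  by_cases hα : α = j
  · subst hα; exact spanQ_a hq α
  have h1 := spanQ_tv hq (symIso_off α j (Ne.symm hij))
  rw [mul_add, map_add, J_mul_single, J_mul_single, cst_single, cst_single] at h1
  have h2 := spanQ_mul (spanQ_b hq (sg α)) h1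
  rw [mul_add, single_mul_single_same, single_mul_single_of_ne _ _ _ _ (fun h => hα (sg_inj h)), add_zero, one_mul] at h2
  exact spanQ_single_of (by push_cast; exact ep_cast_ne α) h2

lemma spanQ_top {q : ℕ} (hq : 1 ≤ q) : spanQ g q = ⊤ := by
  rw [eq_top_iff]
  intro M _
  rw [matrix_eq_sum_single M]
  refine Submodule.sum_mem _ fun i _ => Submodule.sum_mem _ fun j _ => ?_
  have := (spanQ g q).smul_mem (M i j) (spanQ_c hq i j)
  rwa [smul_single, smul_eq_mul, mul_one] at this

end SpSpan

section SpH0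
variable {g : ℕ}

lemma symIso_diagonal (d : Fin (2 * g) → ℤ) (hd : ∀ i, d i * d (sg i) = 0) : SymIso (diagonal d) := by
  refine ⟨by simp, ?_⟩
  ext i j
  rw [mul_diagonal, diagonal_mul, J_apply]
  by_cases h : j = sg i
  · subst h
    rw [if_pos rfl, Matrix.zero_apply]
    linear_combination ep i * hd i
  · rw [if_neg h]; simp

/-- first diagonal -/
def dA (g : ℕ) (i : Fin (2 * g)) : ℤ :=
  if (i : ℕ) % 2 = 0 then ((2 * g : ℕ) : ℤ) ^ 2 + 1 + ((i : ℕ) : ℤ) else 0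

/-- second diagonal -/
def dB (g : ℕ) (i : Fin (2 * g)) : ℤ := if (i : ℕ) % 2 = 0 then 0 else -1

lemma dA_iso (i : Fin (2 * g)) : dA g i * dA g (sg i) = 0 := by
  unfold dA; rw [sg_val]; split_ifs <;> omega

lemma dB_iso (i : Fin (2 * g)) : dB g i * dB g (sg i) = 0 := by
  unfold dB; rw [sg_val]; split_ifs <;> omega

/-- a hyperbolic element with distinct real eigenvalues -/
def hyp (g : ℕ) : Sp g :=
  tv (symIso_diagonal (dA g) dA_iso) (Multiplicative.ofAdd 1) *
    tv (symIso_diagonal (dB g) dB_iso) (Multiplicative.ofAdd 1)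

lemma hyp_mulVec {R : Type*} [CommRing R] (f : ℤ →+* R) (v : Fin (2 * g) → R) (i : Fin (2 * g)) :
    (f.mapMatrix (mat (hyp g)) *ᵥ v) i = if (i : ℕ) % 2 = 0 then v i - v (sg i)
      else v i - f (dA g (sg i)) * (v (sg i) - v i) := by
  have key : ∀ (d : Fin (2 * g) → ℤ) (hd : ∀ i, d i * d (sg i) = 0) (v : Fin (2 * g) → R) (i : Fin (2 * g)),
      (f.mapMatrix (mat (tv (symIso_diagonal d hd) (Multiplicative.ofAdd 1))) *ᵥ v) i =
        v i + f (ep i) * (f (d (sg i)) * v (sg i)) := by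
    intro d hd v i
    rw [mat_tv, one_smul, map_add, map_one, map_mul, add_mulVec, one_mulVec, Pi.add_apply,
      ← mulVec_mulVec, J_mulVec]
    congr 2
    rw [RingHom.mapMatrix_apply, diagonal_map (map_zero f), mulVec_diagonal]
  rw [hyp, map_mul, map_mul, ← mulVec_mulVec, key _ dA_iso, key _ dB_iso, key _ dB_iso]
  have h2 := sg_val i
  by_cases h : (i : ℕ) % 2 = 0
  · have h3 : (sg i : ℕ) % 2 ≠ 0 := by rw [h2, if_pos h]; omega
    simp only [ep, dA, dB, h, h3, if_true, if_false, sg_sg, map_zero, map_one, map_neg]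
    ring
  · have h3 : (sg i : ℕ) % 2 = 0 := by rw [h2, if_neg h]; omega
    simp only [ep, dA, dB, h, h3, if_true, if_false, sg_sg, map_zero, map_one, map_neg]
    ring

lemma hyp_trace (hg : 1 ≤ g) : ((2 * g : ℕ) : ℤ) ^ 2 ≤ trace (mat (hyp g)) := by
  have h1 : ∀ i, mat (hyp g) i i = if (i : ℕ) % 2 = 0 then 1 else 1 + dA g (sg i) := by
    intro i
    have := hyp_mulVec (RingHom.id ℤ) (Pi.single i 1) i
    rw [mulVec_single_one] at this
    simp only [RingHom.mapMatrix_apply] at this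
    change mat (hyp g) i i = _ at this
    rw [this]
    simp [sg_ne]
  have h2 : ∀ i, 0 ≤ mat (hyp g) i i := by
    intro i
    rw [h1]
    split_ifs
    · norm_num
    · unfold dA; split_ifs <;> positivity
  let i : Fin (2 * g) := ⟨1, by omega⟩
  have h3 := Finset.single_le_sum (f := fun i => mat (hyp g) i i) (fun i _ => h2 i) (Finset.mem_univ i)
  refine le_trans ?_ h3
  rw [h1, if_neg (by simp [i])]
  have : (sg i : ℕ) = 0 := by rw [sg_val]; simp [i]
  unfold dA
  rw [this]
  simp
  omega

/-- the block parameter -/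
noncomputable def uu (i : Fin (2 * g)) : ℝ := ((2 * g : ℕ) : ℝ) ^ 2 + 1 + ((2 * ((i : ℕ) / 2) : ℕ) : ℝ)

/-- eigenvalues -/
noncomputable def lamH (i : Fin (2 * g)) : ℝ :=
  ((2 + uu i) + (ep i : ℝ) * Real.sqrt ((2 + uu i) ^ 2 - 4)) / 2

lemma uu_pos (i : Fin (2 * g)) : 0 < uu i := by unfold uu; positivity

lemma lamH_eq (i : Fin (2 * g)) : lamH i ^ 2 - (2 + uu i) * lamH i + 1 = 0 := by
  have hu := uu_pos i
  have h1 : Real.sqrt ((2 + uu i) ^ 2 - 4) ^ 2 = (2 + uu i) ^ 2 - 4 := Real.sq_sqrt (by nlinarith)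
  have h2 : (ep i : ℝ) * ep i = 1 := by exact_mod_cast ep_mul i
  unfold lamH
  linear_combination (1/4) * h1 + (1 / 4) * (Real.sqrt ((2 + uu i) ^ 2 - 4) ^ 2) * h2

lemma lamH_inj : Function.Injective (lamH (g := g)) := by
  intro i j hij
  have h1 := lamH_eq i
  have h2 := lamH_eq j
  rw [← hij] at h2
  have h0 : lamH i ≠ 0 := by intro h; rw [h] at h1; norm_num at h1
  have hu : uu i = uu j := by
    have : (uu j - uu i) * lamH i = 0 := by linear_combination h1 - h2
    rcases mul_eq_zero.1 this with h | h
    · linarith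
    · exact absurd h h0
  have hb : (i : ℕ) / 2 = j / 2 := by
    unfold uu at hu
    have : ((2 * ((i : ℕ) / 2) : ℕ) : ℝ) = ((2 * ((j : ℕ) / 2) : ℕ) : ℝ) := by linarith
    have := Nat.cast_injective this
    omega
  have hs : 0 < Real.sqrt ((2 + uu i) ^ 2 - 4) := Real.sqrt_pos.2 (by have := uu_pos i; nlinarith)
  unfold lamH at hij
  rw [← hu] at hij
  have he : (ep i : ℝ) = ep j := by
    have : ((ep i : ℝ) - ep j) * Real.sqrt ((2 + uu i) ^ 2 - 4) = 0 := by linarith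
    rcases mul_eq_zero.1 this with h | h
    · linarith
    · exact absurd h hs.ne'
  have he' : ep i = ep j := by exact_mod_cast he
  apply Fin.ext
  unfold ep at he'
  split_ifs at he' <;> omega

lemma hyp_diag (g : ℕ) : Nonempty (DiagData (cst (2 * g) (mat (hyp g)))) := by
  obtain ⟨D, -⟩ := diag_of_eigenvectors (cst (2 * g) (mat (hyp g))) (fun i => (lamH i : ℂ))
    (fun i j h => lamH_inj (Complex.ofReal_injective h)) (fun a => by
    refine ⟨fun i => if (i : ℕ) / 2 = (a : ℕ) / 2 then (if (i : ℕ) % 2 = 0 then 1 else 1 - (lamH a : ℂ))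
      else 0, ?_, ?_⟩
    · intro h0
      let p : Fin (2 * g) := ⟨2 * ((a : ℕ) / 2), by have := a.2; omega⟩
      have := congrFun h0 p
      simp [p] at this
    · ext i
      rw [cst, hyp_mulVec]
      have h2 := sg_val i
      have h3 : (sg i : ℕ) / 2 = i / 2 := by rw [h2]; split_ifs <;> omega
      simp only [Pi.smul_apply, smul_eq_mul, h3]
      by_cases hia : (i : ℕ) / 2 = (a : ℕ) / 2
      · have hl : (lamH a : ℂ) ^ 2 - (2 + uu a) * lamH a + 1 = 0 := by exact_mod_cast lamH_eq a
        by_cases h : (i : ℕ) % 2 = 0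
        · have h4 : (sg i : ℕ) % 2 ≠ 0 := by rw [h2, if_pos h]; omega
          simp only [h, h4, hia, if_true, if_false]
          ring
        · have h4 : (sg i : ℕ) % 2 = 0 := by rw [h2, if_neg h]; omega
          have h5 : (sg i : ℕ) = 2 * ((a : ℕ) / 2) := by rw [h2, if_neg h]; omega
          have h6 : (Int.castRingHom ℂ) (dA g (sg i)) = (uu a : ℂ) := by
            unfold dA uu
            rw [if_pos h4, h5]
            generalize 2 * ((a : ℕ) / 2) = k
            push_cast
            simp
          rw [h6]
          simp only [h, h4, hia, if_true, if_false]
          linear_combination hl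
      · simp [hia])
  exact ⟨D⟩

end SpH0

theorem sp_core (g : ℕ) (hg : 1 ≤ g) : 1 < minGrowth (Sp g) := by
  obtain ⟨l, hl, h⟩ := core_theorem (mat (g := g)) (by omega) (hyp g) (hyp_diag g)
    (hyp_trace hg) (fun q hq => spanQ_top hq)
  exact minGrowth_gt (sp_fg g) hl h


/-- for `g ≥ 1`, `Sp(2g,ℤ)` is finitely generated and has uniformly
exponential growth. -/
theorem sp_fg_and_uniform_exponential_growth (g : ℕ) (hg : 1 ≤ g) :
    Group.FG (Sp g) ∧ 1 < minGrowth (Sp g) := by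
  exact ⟨sp_fg g, sp_core g hg⟩
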